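/- (Iwasawa decomposition of the twisted loop group of SL(2,ℂ), for smooth loops.) Let σ₃ = diag(1,-1). Let g : S¹ → SL(2,ℂ) be a smooth map satisfying the twisting condition g(-λ) = σ₃ g(λ) σ₃ for all λ ∈ S¹. Then there exist a smooth map F : S¹ → SU(2) with F(-λ) = σ₃ F(λ) σ₃, and a continuous map B from the closed unit disc to SL(2,ℂ) that is holomorphic on the open unit disc, smooth on S¹, satisfies B(-λ) = σ₃ B(λ) σ₃ on the closed disc, and B(0) = diag(ρ, ρ⁻¹) for some real ρ > 0, such that g(λ) = F(λ) B(λ) for all λ ∈ S¹. Moreover the pair (F, B) is unique. -/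

import Mathlib

open Matrix Complex

noncomputable section

attribute [local instance] Matrix.linftyOpNormedAddCommGroup Matrix.linftyOpNormedSpace
  Matrix.linftyOpNormedRing Matrix.linftyOpNormedAlgebra

/-- The space of 2×2 complex matrices. -/
abbrev M2 : Type := Matrix (Fin 2) (Fin 2) ℂ

/-- Basis vector `e₁` of su(2). -/
def e1 : M2 := !![0, -Complex.I; -Complex.I, 0]

/-- Basis vector `e₂` of su(2). -/
def e2 : M2 := !![0, 1; -1, 0]

/-- Basis vector `e₃` of su(2). -/
def e3 : M2 := !![Complex.I, 0; 0, -Complex.I]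

/-- The inner product `⟨X,Y⟩ = -(1/2) tr (XY)` identifying su(2) with E³. -/
def ip (X Y : M2) : ℂ := -(1/2 : ℂ) * (X * Y).trace

/-- Partial derivative in the `x`-direction. -/
def px (f : ℂ → M2) (z : ℂ) : M2 := fderiv ℝ f z 1

/-- Partial derivative in the `y`-direction. -/
def py (f : ℂ → M2) (z : ℂ) : M2 := fderiv ℝ f z Complex.I

/-- Wirtinger derivative `∂_z = (1/2)(∂_x - i ∂_y)`. -/
def dz (f : ℂ → M2) (z : ℂ) : M2 := (2:ℂ)⁻¹ • (px f z - Complex.I • py f z)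

/-- Wirtinger derivative `∂_z̄ = (1/2)(∂_x + i ∂_y)`. -/
def dzb (f : ℂ → M2) (z : ℂ) : M2 := (2:ℂ)⁻¹ • (px f z + Complex.I • py f z)

/-- `x`-derivative of a real-valued function on ℂ. -/
def pxR (u : ℂ → ℝ) (z : ℂ) : ℝ := fderiv ℝ u z 1

/-- `y`-derivative of a real-valued function on ℂ. -/
def pyR (u : ℂ → ℝ) (z : ℂ) : ℝ := fderiv ℝ u z Complex.I

/-- Wirtinger derivative `u_z` of a real-valued function. -/
def dzR (u : ℂ → ℝ) (z : ℂ) : ℂ := (2:ℂ)⁻¹ * ((pxR u z : ℂ) - Complex.I * (pyR u z : ℂ))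

/-- Wirtinger derivative `u_z̄` of a real-valued function. -/
def dzbR (u : ℂ → ℝ) (z : ℂ) : ℂ := (2:ℂ)⁻¹ * ((pxR u z : ℂ) + Complex.I * (pyR u z : ℂ))

/-- `x`-derivative of a complex-valued function on ℂ. -/
def pxC (q : ℂ → ℂ) (z : ℂ) : ℂ := fderiv ℝ q z 1

/-- `y`-derivative of a complex-valued function on ℂ. -/
def pyC (q : ℂ → ℂ) (z : ℂ) : ℂ := fderiv ℝ q z Complex.I

/-- Wirtinger derivative `∂_z` of a complex-valued function. -/
def dzC (q : ℂ → ℂ) (z : ℂ) : ℂ := (2:ℂ)⁻¹ * (pxC q z - Complex.I * pyC q z)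

/-- Wirtinger derivative `∂_z̄` of a complex-valued function. -/
def dzbC (q : ℂ → ℂ) (z : ℂ) : ℂ := (2:ℂ)⁻¹ * (pxC q z + Complex.I * pyC q z)

/-- The matrix σ₃ = diag(1,-1) defining the twisting involution. -/
def sigma3 : M2 := !![1, 0; 0, -1]

/-- `IwasawaPair g F B ρ` records the conditions on the factors of an Iwasawa
decomposition `g = F B` of a smooth twisted loop `g : S¹ → SL(2,ℂ)`:
`F` is a smooth twisted loop in `SU(2)` and `B` extends holomorphically to the unit
disc, is twisted, and satisfies `B(0) = diag(ρ, ρ⁻¹)` with `ρ > 0`. -/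
def IwasawaPair (g F B : ℂ → M2) (ρ : ℝ) : Prop :=
  ContDiff ℝ (⊤ : ℕ∞) (fun t : ℝ => F (Complex.exp (Complex.I * t))) ∧
  (∀ l : ℂ, ‖l‖ = 1 →
    (F l)ᴴ * F l = 1 ∧ (F l).det = 1 ∧ F (-l) = sigma3 * F l * sigma3) ∧
  ContinuousOn B (Metric.closedBall (0:ℂ) 1) ∧
  DifferentiableOn ℂ B (Metric.ball (0:ℂ) 1) ∧
  ContDiff ℝ (⊤ : ℕ∞) (fun t : ℝ => B (Complex.exp (Complex.I * t))) ∧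
  (∀ l ∈ Metric.closedBall (0:ℂ) 1, (B l).det = 1 ∧ B (-l) = sigma3 * B l * sigma3) ∧
  0 < ρ ∧ B 0 = !![(ρ : ℂ), 0; 0, ((ρ⁻¹ : ℝ) : ℂ)] ∧
  (∀ l : ℂ, ‖l‖ = 1 → g l = F l * B l)



/-! ### Fourier analysis of smooth periodic functions -/

/-- The exponential `e^{ikt}`. -/
def ex (k : ℤ) (t : ℝ) : ℂ := Complex.exp (k * (Complex.I * t))

lemma ex_zpow (k : ℤ) (t : ℝ) : ex k t = Complex.exp (Complex.I * t) ^ k := by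
  rw [ex, Complex.exp_int_mul]

lemma ex_nat (n : ℕ) (t : ℝ) : ex n t = Complex.exp (Complex.I * t) ^ n := by
  rw [ex_zpow, zpow_natCast]

lemma norm_ex (k : ℤ) (t : ℝ) : ‖ex k t‖ = 1 := by
  rw [ex, show (k : ℂ) * (Complex.I * t) = ((k * t : ℝ) : ℂ) * Complex.I by push_cast; ring]
  exact Complex.norm_exp_ofReal_mul_I _

lemma ex_add (k l : ℤ) (t : ℝ) : ex (k + l) t = ex k t * ex l t := by
  rw [ex, ex, ex, ← Complex.exp_add]; congr 1; push_cast; ring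

lemma ex_zero (t : ℝ) : ex 0 t = 1 := by simp [ex]

lemma ex_at_zero (k : ℤ) : ex k 0 = 1 := by simp [ex]

lemma ex_add_arg (k : ℤ) (s t : ℝ) : ex k (s + t) = ex k s * ex k t := by
  rw [ex, ex, ex, ← Complex.exp_add]; congr 1; push_cast; ring

lemma ex_conj (k : ℤ) (t : ℝ) : (starRingEnd ℂ) (ex k t) = ex (-k) t := by
  rw [ex, ex, ← Complex.exp_conj]; congr 1; simp

lemma ex_contDiff (k : ℤ) {n : WithTop ℕ∞} : ContDiff ℝ n (ex k) := by
  unfold ex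
  exact (contDiff_const.mul (contDiff_const.mul Complex.ofRealCLM.contDiff)).cexp

lemma ex_continuous (k : ℤ) : Continuous (ex k) := (ex_contDiff k (n := 0)).continuous

lemma ex_hasDerivAt (k : ℤ) (t : ℝ) : HasDerivAt (ex k) ((Complex.I * k) * ex k t) t := by
  have h1 : HasDerivAt (fun t : ℝ => (k : ℂ) * (Complex.I * (t : ℂ))) (k * (Complex.I * 1)) t :=
    ((Complex.ofRealCLM.hasDerivAt (x := t)).const_mul Complex.I).const_mul (k : ℂ)
  have := h1.cexp
  convert! this using 1
  simp only [ex]; ring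

lemma iteratedDeriv_ex_smul {E : Type*} [NormedAddCommGroup E] [NormedSpace ℂ E]
    (k : ℤ) (A : E) (m : ℕ) :
    iteratedDeriv m (fun t => ex k t • A) = fun t => (Complex.I * k) ^ m • ex k t • A := by
  induction m with
  | zero => simp
  | succ m ih =>
    rw [iteratedDeriv_succ, ih]
    funext t
    have h := (((ex_hasDerivAt k t).smul_const A).const_smul ((Complex.I * k) ^ m)).deriv
    refine (Eq.trans ?_ h).trans ?_
    · rfl
    · rw [pow_succ]; simp only [smul_smul]; ring_nf

lemma contDiff_fourier_tsum {ι E : Type*} [NormedAddCommGroup E] [NormedSpace ℂ E]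
    [CompleteSpace E]
    (fr : ι → ℤ) (A : ι → E) (h : ∀ m : ℕ, Summable fun k => |(fr k : ℝ)| ^ m * ‖A k‖) :
    ContDiff ℝ (⊤ : ℕ∞) (fun t => ∑' k, ex (fr k) t • A k) := by
  refine contDiff_tsum (v := fun m k => |(fr k : ℝ)| ^ m * ‖A k‖) ?_ ?_ ?_
  · intro i
    exact (ex_contDiff _).smul contDiff_const
  · intro m _
    exact h m
  · intro m i x _
    rw [norm_iteratedFDeriv_eq_norm_iteratedDeriv, iteratedDeriv_ex_smul]
    simp [norm_smul, norm_ex]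

/-- Fourier coefficients. -/
def cf (f : ℝ → ℂ) (k : ℤ) : ℂ :=
  ((2 * Real.pi : ℝ) : ℂ)⁻¹ * ∫ t in (0 : ℝ)..(2 * Real.pi), f t * ex (-k) t

lemma fourier_eq_ex (k : ℤ) (t : ℝ) :
    fourier k (t : AddCircle (2 * Real.pi)) = ex k t := by
  rw [fourier_coe_apply, ex]
  congr 1
  have : (Real.pi : ℂ) ≠ 0 := by exact_mod_cast Real.pi_ne_zero
  push_cast
  field_simp

lemma ex_periodic (k : ℤ) : Function.Periodic (ex k) (2 * Real.pi) := by
  intro t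
  rw [← fourier_eq_ex, ← fourier_eq_ex]
  simp

/-- Bound on Fourier coefficients. -/
lemma norm_cf_le (f : ℝ → ℂ) (C : ℝ) (hC : ∀ t ∈ Set.Icc 0 (2 * Real.pi), ‖f t‖ ≤ C) (k : ℤ) :
    ‖cf f k‖ ≤ C := by
  have h := intervalIntegral.norm_integral_le_of_norm_le_const (a := 0) (b := 2 * Real.pi)
    (f := fun t => f t * ex (-k) t) (C := C) (by
      intro t ht
      rw [Set.uIoc_of_le (by positivity)] at ht
      rw [norm_mul, norm_ex, mul_one]
      exact hC t ⟨ht.1.le, ht.2⟩)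
  have hp : (0 : ℝ) < 2 * Real.pi := by positivity
  rw [cf, norm_mul, norm_inv, Complex.norm_real, Real.norm_of_nonneg hp.le]
  rw [sub_zero, abs_of_pos hp] at h
  rw [inv_mul_le_iff₀ hp]
  linarith

lemma cf_deriv (f : ℝ → ℂ) (hf : ContDiff ℝ (⊤ : ℕ∞) f)
    (hp : Function.Periodic f (2 * Real.pi)) (k : ℤ) :
    cf (deriv f) k = (Complex.I * k) * cf f k := by
  have h1 : ∀ t, HasDerivAt f (deriv f t) t := fun t =>
    (hf.differentiable (by simp) t).hasDerivAt
  have hd : Continuous (deriv f) := hf.continuous_deriv (by simp)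
  have := intervalIntegral.integral_deriv_mul_eq_sub (a := 0) (b := 2 * Real.pi)
    (u := f) (v := ex (-k)) (u' := deriv f)
    (v' := fun t => (Complex.I * ((-k : ℤ) : ℂ)) * ex (-k) t)
    (fun t _ => h1 t) (fun t _ => ex_hasDerivAt _ t)
    (hd.intervalIntegrable _ _) ((continuous_const.mul (ex_continuous _)).intervalIntegrable _ _)
  have hb : f (2 * Real.pi) = f 0 := by simpa using hp 0
  have hb2 : ex (-k) (2 * Real.pi) = ex (-k) 0 := by simpa using ex_periodic (-k) 0
  rw [hb, hb2, sub_self, intervalIntegral.integral_add] at this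
  · have h2 : ∫ t in (0 : ℝ)..(2 * Real.pi), f t * ((Complex.I * ((-k : ℤ) : ℂ)) * ex (-k) t)
        = (Complex.I * ((-k : ℤ) : ℂ)) * ∫ t in (0 : ℝ)..(2 * Real.pi), f t * ex (-k) t := by
      rw [← intervalIntegral.integral_const_mul]
      congr 1; funext t; ring
    rw [h2] at this
    rw [cf, cf, eq_neg_of_add_eq_zero_left this]
    push_cast; ring
  · exact (hd.mul (ex_continuous _)).intervalIntegrable _ _
  · exact (hf.continuous.mul (continuous_const.mul (ex_continuous _))).intervalIntegrable _ _

lemma periodic_deriv (f : ℝ → ℂ) (c : ℝ) (hp : Function.Periodic f c) :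
    Function.Periodic (deriv f) c := by
  intro t
  rw [← deriv_comp_add_const]
  congr 1
  funext s
  exact hp s

/-- Smooth periodic functions have rapidly decaying Fourier coefficients. -/
lemma cf_decay (m : ℕ) : ∀ (f : ℝ → ℂ), ContDiff ℝ (⊤ : ℕ∞) f →
    Function.Periodic f (2 * Real.pi) → ∃ C : ℝ, ∀ k : ℤ, |(k : ℝ)| ^ m * ‖cf f k‖ ≤ C := by
  induction m with
  | zero =>
    intro f hf hp
    obtain ⟨C, hC⟩ := isCompact_Icc.exists_bound_of_continuousOn
      (hf.continuous.continuousOn (s := Set.Icc 0 (2 * Real.pi)))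
    refine ⟨C, fun k => ?_⟩
    simpa using norm_cf_le f C hC k
  | succ m ih =>
    intro f hf hp
    obtain ⟨C, hC⟩ := ih (deriv f) (by
      have h2 : ContDiff ℝ (((⊤ : ℕ∞) : WithTop ℕ∞) + 1) f := by simpa using hf
      exact (contDiff_succ_iff_deriv.1 h2).2.2) (periodic_deriv f _ hp)
    refine ⟨C, fun k => ?_⟩
    refine le_trans (le_of_eq ?_) (hC k)
    rw [cf_deriv f hf hp, norm_mul, norm_mul]
    simp only [Complex.norm_I, one_mul, Complex.norm_intCast]
    ring

lemma summable_of_decay {a : ℤ → ℝ} (ha : ∀ k, 0 ≤ a k)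
    (h : ∀ m : ℕ, ∃ C : ℝ, ∀ k : ℤ, |(k : ℝ)| ^ m * a k ≤ C) (m : ℕ) :
    Summable fun k : ℤ => |(k : ℝ)| ^ m * a k := by
  obtain ⟨C, hC⟩ := h (m + 2)
  have hs : Summable fun k : ℤ => C * (1 / (k : ℝ) ^ 2) :=
    (Real.summable_one_div_int_pow.2 (by norm_num)).mul_left C
  refine Summable.of_norm_bounded_eventually hs ?_
  have : {k : ℤ | ¬ ‖|(k : ℝ)| ^ m * a k‖ ≤ C * (1 / (k : ℝ) ^ 2)} ⊆ {0} := by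
    intro k hk
    by_contra h0
    apply hk
    have hk0 : (k : ℝ) ≠ 0 := by exact_mod_cast h0
    rw [Real.norm_of_nonneg (mul_nonneg (by positivity) (ha k)), mul_one_div,
      le_div_iff₀ (by positivity)]
    refine le_trans (le_of_eq ?_) (hC k)
    rw [pow_add, sq_abs]; ring
  exact (Set.finite_singleton 0).subset this

lemma cf_summable (f : ℝ → ℂ) (hf : ContDiff ℝ (⊤ : ℕ∞) f)
    (hp : Function.Periodic f (2 * Real.pi)) (m : ℕ) :
    Summable fun k : ℤ => |(k : ℝ)| ^ m * ‖cf f k‖ :=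
  summable_of_decay (fun _ => norm_nonneg _) (fun m => cf_decay m f hf hp) m

lemma cf_hasSum (f : ℝ → ℂ) (hf : ContDiff ℝ (⊤ : ℕ∞) f)
    (hp : Function.Periodic f (2 * Real.pi)) (t : ℝ) :
    HasSum (fun k : ℤ => cf f k * ex k t) (f t) := by
  have : Fact (0 < 2 * Real.pi) := ⟨by positivity⟩
  let φ : C(AddCircle (2 * Real.pi), ℂ) :=
    ⟨hp.lift, by
      rw [show (hp.lift : AddCircle (2 * Real.pi) → ℂ) = hp.lift from rfl]
      exact (continuous_quot_lift _ hf.continuous)⟩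
  have hφ : ∀ s : ℝ, φ (s : AddCircle (2 * Real.pi)) = f s := fun s => hp.lift_coe s
  have hc : ∀ k, fourierCoeff φ k = cf f k := by
    intro k
    rw [fourierCoeff_eq_intervalIntegral _ _ 0, cf, zero_add]
    simp only [hφ, fourier_eq_ex, smul_eq_mul]
    rw [Complex.real_smul]
    push_cast
    rw [one_div]
    congr 1
    congr 1
    funext s; ring
  have hs : Summable (fourierCoeff φ) := by
    rw [show fourierCoeff φ = cf f from funext hc]
    apply Summable.of_norm
    simpa using cf_summable f hf hp 0
  have := has_pointwise_sum_fourier_series_of_summable hs (t : AddCircle (2 * Real.pi))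
  simpa only [hc, hφ, fourier_eq_ex, smul_eq_mul] using this

lemma cf_one (k : ℤ) : cf (fun _ => 1) k = if k = 0 then 1 else 0 := by
  have hpi : (Real.pi : ℂ) ≠ 0 := by exact_mod_cast Real.pi_ne_zero
  split_ifs with h
  · subst h
    simp [cf, ex]
    field_simp
  · have := cf_deriv (fun _ => 1) contDiff_const (fun _ => rfl) k
    have h0 : cf (deriv (fun _ : ℝ => (1 : ℂ))) k = 0 := by simp [cf]
    rw [h0] at this
    have hk : (k : ℂ) ≠ 0 := by exact_mod_cast h
    rcases mul_eq_zero.1 this.symm with h1 | h1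
    · simp [hk] at h1
    · exact h1


/-! ### Block Toeplitz operators on `ℓ²(ℕ × Fin 2)` -/

/-- The Hardy space of `ℂ²`-valued functions, in terms of Fourier coefficients. -/
abbrev HH : Type := lp (fun _ : ℕ × Fin 2 => ℂ) 2

lemma wc_bound (w : ℕ × Fin 2 → ℂ) (φ : ℕ × Fin 2 → ℕ × Fin 2) (hw : ∀ p, ‖w p‖ ≤ 1)
    (hφ : ∀ p q, w p ≠ 0 → w q ≠ 0 → φ p = φ q → p = q) (x : HH) (s : Finset (ℕ × Fin 2)) :
    ∑ p ∈ s, ‖w p * x (φ p)‖ ^ (2 : ENNReal).toReal ≤ ‖x‖ ^ (2 : ENNReal).toReal := by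
  classical
  calc ∑ p ∈ s, ‖w p * x (φ p)‖ ^ (2 : ENNReal).toReal
      = ∑ p ∈ s with w p ≠ 0, ‖w p * x (φ p)‖ ^ (2 : ENNReal).toReal := by
        rw [Finset.sum_filter]
        refine Finset.sum_congr rfl fun p _ => ?_
        split_ifs with h
        · rfl
        · have : w p = 0 := by simpa using h
          simp [this]
    _ ≤ ∑ p ∈ s with w p ≠ 0, ‖x (φ p)‖ ^ (2 : ENNReal).toReal := by
        refine Finset.sum_le_sum fun p _ => ?_
        refine Real.rpow_le_rpow (norm_nonneg _) ?_ (by simp)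
        rw [norm_mul]
        exact mul_le_of_le_one_left (norm_nonneg _) (hw p)
    _ = ∑ q ∈ (s.filter fun p => w p ≠ 0).image φ, ‖x q‖ ^ (2 : ENNReal).toReal := by
        rw [Finset.sum_image]
        intro p hp q hq hpq
        simp only [Finset.coe_filter, Set.mem_ofPred_eq] at hp hq
        exact hφ p q hp.2 hq.2 hpq
    _ ≤ _ := lp.sum_rpow_le_norm_rpow (by simp) x _

/-- Weighted composition operator on `HH`. -/
def wc (w : ℕ × Fin 2 → ℂ) (φ : ℕ × Fin 2 → ℕ × Fin 2) (hw : ∀ p, ‖w p‖ ≤ 1)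
    (hφ : ∀ p q, w p ≠ 0 → w q ≠ 0 → φ p = φ q → p = q) : HH →L[ℂ] HH :=
  LinearMap.mkContinuous
    { toFun := fun x => ⟨fun p => w p * x (φ p), memℓp_gen' (wc_bound w φ hw hφ x)⟩
      map_add' := by
        intro x y
        ext p
        exact mul_add _ _ _
      map_smul' := by
        intro c x
        ext p
        exact mul_left_comm _ _ _ } 1 (by
    intro x
    rw [one_mul]
    exact lp.norm_le_of_forall_sum_le (by simp) (norm_nonneg _) (wc_bound w φ hw hφ x))

lemma wc_apply (w : ℕ × Fin 2 → ℂ) (φ : ℕ × Fin 2 → ℕ × Fin 2) (hw : ∀ p, ‖w p‖ ≤ 1)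
    (hφ : ∀ p q, w p ≠ 0 → w q ≠ 0 → φ p = φ q → p = q) (x : HH) (p : ℕ × Fin 2) :
    wc w φ hw hφ x p = w p * x (φ p) := rfl

lemma wc_norm (w : ℕ × Fin 2 → ℂ) (φ : ℕ × Fin 2 → ℕ × Fin 2) (hw : ∀ p, ‖w p‖ ≤ 1)
    (hφ : ∀ p q, w p ≠ 0 → w q ≠ 0 → φ p = φ q → p = q) : ‖wc w φ hw hφ‖ ≤ 1 :=
  LinearMap.mkContinuous_norm_le _ zero_le_one _

/-- Shift by `k` combined with the matrix unit `E_{ij}`. -/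
def Ush (k : ℤ) (i j : Fin 2) : HH →L[ℂ] HH :=
  wc (fun p => if p.2 = i ∧ 0 ≤ (p.1 : ℤ) - k then 1 else 0)
    (fun p => (((p.1 : ℤ) - k).toNat, j))
    (by intro p; split_ifs <;> simp)
    (by
      rintro ⟨m, i1⟩ ⟨n, i2⟩ h1 h2 h3
      simp only [ne_eq, ite_eq_right_iff, one_ne_zero, imp_false, not_not, Prod.mk.injEq,
        and_true] at h1 h2 h3 ⊢
      refine ⟨?_, h1.1.trans h2.1.symm⟩
      omega)

/-- Rotation operator. -/
def Rot (θ : ℝ) : HH →L[ℂ] HH :=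
  wc (fun p => ex p.1 θ) id (fun _ => (norm_ex _ _).le) (fun _ _ _ _ h => h)

lemma Ush_apply (k : ℤ) (i j : Fin 2) (x : HH) (p : ℕ × Fin 2) :
    Ush k i j x p = (if p.2 = i ∧ 0 ≤ (p.1 : ℤ) - k then 1 else 0) *
      x (((p.1 : ℤ) - k).toNat, j) := rfl

lemma Rot_apply (θ : ℝ) (x : HH) (p : ℕ × Fin 2) : Rot θ x p = ex p.1 θ * x p := rfl

lemma Rot_Ush (k : ℤ) (i j : Fin 2) (θ : ℝ) :
    (ex k θ • Ush k i j) * Rot θ = Rot θ * Ush k i j := by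
  ext x p
  simp only [mul_apply_eq_comp, _root_.smul_apply, lp.coeFn_smul,
    Pi.smul_apply, smul_eq_mul, Ush_apply, Rot_apply]
  split_ifs with h
  · have h2 : ((((p.1 : ℤ) - k).toNat : ℕ) : ℤ) = p.1 - k := by omega
    rw [h2, show ex (p.1 : ℤ) θ = ex k θ * ex (p.1 - k) θ by rw [← ex_add]; congr 1; ring]
    ring
  · simp

lemma Rot_mul_neg (θ : ℝ) : Rot θ * Rot (-θ) = 1 := by
  ext x p
  simp only [mul_apply_eq_comp, Rot_apply, one_apply_eq_self]
  rw [← mul_assoc, ← ex_add_arg, add_neg_cancel, ex_at_zero, one_mul]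

/-- The `k`-th Fourier mode of the Toeplitz operator. -/
def Amode (h : Fin 2 → Fin 2 → ℤ → ℂ) (k : ℤ) : HH →L[ℂ] HH :=
  ∑ i, ∑ j, h i j k • Ush k i j

/-- The (rotated) Toeplitz operator. -/
def Toep (h : Fin 2 → Fin 2 → ℤ → ℂ) (θ : ℝ) : HH →L[ℂ] HH :=
  ∑' k : ℤ, ex k θ • Amode h k

lemma Amode_norm (h : Fin 2 → Fin 2 → ℤ → ℂ) (k : ℤ) :
    ‖Amode h k‖ ≤ ∑ i, ∑ j, ‖h i j k‖ := by
  refine (norm_sum_le _ _).trans (Finset.sum_le_sum fun i _ => ?_)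
  refine (norm_sum_le _ _).trans (Finset.sum_le_sum fun j _ => ?_)
  rw [norm_smul]
  exact mul_le_of_le_one_right (norm_nonneg _) (wc_norm _ _ _ _)

lemma Amode_summable (h : Fin 2 → Fin 2 → ℤ → ℂ)
    (hh : ∀ i j, ∀ m : ℕ, Summable fun k : ℤ => |(k : ℝ)| ^ m * ‖h i j k‖) (m : ℕ) :
    Summable fun k : ℤ => |(k : ℝ)| ^ m * ‖Amode h k‖ := by
  refine Summable.of_nonneg_of_le (f := fun k : ℤ => ∑ i, ∑ j, |(k : ℝ)| ^ m * ‖h i j k‖)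
    (fun k => by positivity) (fun k => ?_) ?_
  · simp only [← Finset.mul_sum]
    exact mul_le_mul_of_nonneg_left (Amode_norm h k) (by positivity)
  · exact summable_sum fun i _ => summable_sum fun j _ => hh i j m

lemma Toep_contDiff (h : Fin 2 → Fin 2 → ℤ → ℂ)
    (hh : ∀ i j, ∀ m : ℕ, Summable fun k : ℤ => |(k : ℝ)| ^ m * ‖h i j k‖) :
    ContDiff ℝ (⊤ : ℕ∞) (Toep h) :=
  contDiff_fourier_tsum (fun k => k) (Amode h) (Amode_summable h hh)

lemma Toep_summable (h : Fin 2 → Fin 2 → ℤ → ℂ)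
    (hh : ∀ i j, ∀ m : ℕ, Summable fun k : ℤ => |(k : ℝ)| ^ m * ‖h i j k‖) (θ : ℝ) :
    Summable fun k : ℤ => ex k θ • Amode h k := by
  apply Summable.of_norm
  simpa [norm_smul, norm_ex] using Amode_summable h hh 0

lemma Toep_Rot (h : Fin 2 → Fin 2 → ℤ → ℂ)
    (hh : ∀ i j, ∀ m : ℕ, Summable fun k : ℤ => |(k : ℝ)| ^ m * ‖h i j k‖) (θ : ℝ) :
    Toep h θ * Rot θ = Rot θ * Toep h 0 := by
  rw [Toep, Toep, ← (Toep_summable h hh θ).tsum_mul_right, ← (Toep_summable h hh 0).tsum_mul_left]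
  congr 1
  funext k
  rw [ex_at_zero, one_smul, Amode]
  simp only [Finset.smul_sum, Finset.sum_mul, Finset.mul_sum]
  refine Finset.sum_congr rfl fun i _ => Finset.sum_congr rfl fun j _ => ?_
  rw [smul_comm, smul_mul_assoc, Rot_Ush, mul_smul_comm]

/-- Coordinate functional. -/
def evl (p : ℕ × Fin 2) : HH →L[ℂ] ℂ :=
  LinearMap.mkContinuous { toFun := fun x => x p, map_add' := fun _ _ => rfl,
                           map_smul' := fun _ _ => rfl } 1
    (by intro x; rw [one_mul]; exact lp.norm_apply_le_norm (by simp) x p)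

lemma evl_apply (p : ℕ × Fin 2) (x : HH) : evl p x = x p := rfl

lemma evl_norm (p : ℕ × Fin 2) : ‖evl p‖ ≤ 1 :=
  LinearMap.mkContinuous_norm_le _ zero_le_one _

lemma Toep_single (h : Fin 2 → Fin 2 → ℤ → ℂ)
    (hh : ∀ i j, ∀ m : ℕ, Summable fun k : ℤ => |(k : ℝ)| ^ m * ‖h i j k‖) (p q : ℕ × Fin 2) :
    Toep h 0 (lp.single 2 q (1 : ℂ)) p = h p.2 q.2 ((p.1 : ℤ) - q.1) := by
  have hs := Toep_summable h hh 0
  have h1 : HasSum (fun k : ℤ => (Amode h k (lp.single 2 q (1 : ℂ)) : HH) p)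
      (Toep h 0 (lp.single 2 q (1 : ℂ)) p) := by
    have h2 := hs.hasSum.mapL
      ((evl p).comp (ContinuousLinearMap.apply ℂ HH (lp.single 2 q (1 : ℂ) : HH)))
    simpa [ex_at_zero, evl_apply, Toep] using h2
  refine h1.unique ?_
  have h3 : ∀ k : ℤ, (Amode h k (lp.single 2 q (1 : ℂ)) : HH) p =
      if k = (p.1 : ℤ) - q.1 then h p.2 q.2 ((p.1 : ℤ) - q.1) else 0 := by
    intro k
    obtain ⟨m, i'⟩ := p
    obtain ⟨n, j'⟩ := q
    have h4 : ∀ i j, (Ush k i j (lp.single 2 (n, j') (1 : ℂ)) : HH) (m, i') =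
        if i' = i then (if j' = j then (if k = (m : ℤ) - n then 1 else 0) else 0) else 0 := by
      intro i j
      rw [Ush_apply, lp.single_apply, Pi.single_apply]
      simp only [Prod.mk.injEq]
      split_ifs <;> first | rfl | (simp; done) | (exfalso; omega)
    simp only [Amode, _root_.sum_apply, _root_.smul_apply,
      lp.coeFn_sum, Finset.sum_apply, lp.coeFn_smul, Pi.smul_apply, h4, smul_eq_mul]
    split_ifs with hk
    · rw [hk]; simp
    · simp
  simp only [h3]
  exact hasSum_ite_eq _ _

lemma Toep_apply (h : Fin 2 → Fin 2 → ℤ → ℂ)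
    (hh : ∀ i j, ∀ m : ℕ, Summable fun k : ℤ => |(k : ℝ)| ^ m * ‖h i j k‖) (x : HH)
    (p : ℕ × Fin 2) :
    HasSum (fun q : ℕ × Fin 2 => x q * h p.2 q.2 ((p.1 : ℤ) - q.1)) (Toep h 0 x p) := by
  have h1 := (lp.hasSum_single (by simp) x).mapL ((evl p).comp (Toep h 0))
  convert! h1 using 1
  · funext q
    rw [← Toep_single h hh]
    have : (lp.single 2 q (x q) : HH) = x q • lp.single 2 q (1 : ℂ) := by
      rw [← lp.single_smul]; simp
    rw [this]
    simp [evl_apply]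

theorem toeplitz_solve (h : Fin 2 → Fin 2 → ℤ → ℂ)
    (hh : ∀ i j, ∀ m : ℕ, Summable fun k : ℤ => |(k : ℝ)| ^ m * ‖h i j k‖)
    (c : ℝ) (hc : 0 < c) (hco : ∀ x : HH, c * ‖x‖ ^ 2 ≤ (inner ℂ x (Toep h 0 x)).re)
    (j : Fin 2) :
    ∃ x : HH, Toep h 0 x = lp.single 2 (0, j) (1 : ℂ) ∧
      ∀ m : ℕ, ∃ C : ℝ, ∀ p : ℕ × Fin 2, (p.1 : ℝ) ^ m * ‖x p‖ ≤ C := by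
  have hU : IsUnit (Toep h 0) := by
    refine ContinuousLinearMap.isUnit_of_forall_le_norm_inner_map _ (c := ⟨c, hc.le⟩) hc ?_
    intro x
    rw [mul_comm, ← inner_conj_symm, RCLike.norm_conj]
    exact (hco x).trans (Complex.re_le_norm _)
  set e : HH := lp.single 2 (0, j) (1 : ℂ) with he
  set x : HH := Ring.inverse (Toep h 0) e with hx
  have hx1 : Toep h 0 x = e := by
    rw [hx, ← mul_apply_eq_comp, Ring.mul_inverse_cancel _ hU]; rfl
  refine ⟨x, hx1, fun m => ?_⟩
  have hRe : ∀ θ, Rot θ e = e := by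
    intro θ
    ext p
    rw [Rot_apply, he, lp.single_apply, Pi.single_apply]
    split_ifs with hp
    · rw [hp]; simp [ex_zero]
    · simp
  have hUθ : ∀ θ, IsUnit (Toep h θ) := by
    intro θ
    have h1 : Toep h θ = Rot θ * Toep h 0 * Rot (-θ) := by
      rw [← Toep_Rot h hh, mul_assoc, Rot_mul_neg, mul_one]
    have h2 : IsUnit (Rot θ) := by
      refine ⟨⟨Rot θ, Rot (-θ), Rot_mul_neg θ, ?_⟩, rfl⟩
      simpa using Rot_mul_neg (-θ)
    have h3 : IsUnit (Rot (-θ)) := by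
      refine ⟨⟨Rot (-θ), Rot θ, ?_, Rot_mul_neg θ⟩, rfl⟩
      simpa using Rot_mul_neg (-θ)
    rw [h1]
    exact (h2.mul hU).mul h3
  have hxθ : ∀ θ, Ring.inverse (Toep h θ) e = Rot θ x := by
    intro θ
    have h1 : Toep h θ (Rot θ x) = e := by
      rw [← mul_apply_eq_comp, Toep_Rot h hh, mul_apply_eq_comp, hx1, hRe]
    rw [← h1, ← mul_apply_eq_comp, Ring.inverse_mul_cancel _ (hUθ θ)]; rfl
  have hsm : ContDiff ℝ (⊤ : ℕ∞) (fun θ => Rot θ x) := by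
    have h1 : ContDiff ℝ (⊤ : ℕ∞) (fun θ => Ring.inverse (Toep h θ)) := by
      rw [contDiff_iff_contDiffAt]
      intro θ
      obtain ⟨u, hu⟩ := hUθ θ
      have h2 : ContDiffAt ℂ (⊤ : ℕ∞) Ring.inverse (Toep h θ) := by
        rw [← hu]; exact contDiffAt_ringInverse ℂ u
      exact (h2.restrict_scalars ℝ).comp θ (Toep_contDiff h hh).contDiffAt
    have h3 : (fun θ => Rot θ x) = fun θ =>
        (((ContinuousLinearMap.apply ℂ HH e).restrictScalars ℝ)) (Ring.inverse (Toep h θ)) := by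
      funext θ
      rw [← hxθ]; rfl
    rw [h3]
    exact ContinuousLinearMap.contDiff _ |>.comp h1
  refine ⟨‖iteratedFDeriv ℝ m (fun θ => Rot θ x) 0‖, fun p => ?_⟩
  have h4 : (fun θ => ex p.1 θ • x p) = ((evl p).restrictScalars ℝ) ∘ (fun θ => Rot θ x) := by
    funext θ
    rfl
  have h5 := ((evl p).restrictScalars ℝ).norm_iteratedFDeriv_comp_left (f := fun θ => Rot θ x)
    (x := 0) (N := (⊤ : ℕ∞)) (n := m) hsm.contDiffAt (by exact_mod_cast le_top)
  rw [← h4, norm_iteratedFDeriv_eq_norm_iteratedDeriv, iteratedDeriv_ex_smul] at h5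
  simp only [ex_at_zero, one_smul, norm_smul, norm_pow, norm_mul, Complex.norm_I, one_mul] at h5
  have h6 : ‖((p.1 : ℤ) : ℂ)‖ = (p.1 : ℝ) := by simp
  rw [h6] at h5
  refine h5.trans (mul_le_of_le_one_left (norm_nonneg _) ?_)
  rw [ContinuousLinearMap.norm_restrictScalars]
  exact evl_norm p


/-! ### Coercivity -/

/-- Entries of the Gram matrix `Gᴴ G`. -/
def Gram (G : Fin 2 → Fin 2 → ℝ → ℂ) (i j : Fin 2) (t : ℝ) : ℂ :=
  ∑ l, (starRingEnd ℂ) (G l i t) * G l j t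

/-- Components of `G` applied to a trigonometric polynomial. -/
def wv (G : Fin 2 → Fin 2 → ℝ → ℂ) (s : Finset (ℕ × Fin 2)) (x : ℕ × Fin 2 → ℂ) (l : Fin 2)
    (t : ℝ) : ℂ :=
  ∑ q ∈ s, G l q.2 t * (x q * ex q.1 t)

lemma gram_quad (G : Fin 2 → Fin 2 → ℝ → ℂ) (hG : ∀ i j, Continuous (G i j))
    (s : Finset (ℕ × Fin 2)) (x : ℕ × Fin 2 → ℂ) :
    ∑ p ∈ s, ∑ q ∈ s, (starRingEnd ℂ) (x p) * (x q * cf (Gram G p.2 q.2) ((p.1 : ℤ) - q.1)) =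
      (((2 * Real.pi)⁻¹ * ∫ t in (0 : ℝ)..(2 * Real.pi), ∑ l, ‖wv G s x l t‖ ^ 2 : ℝ) : ℂ) := by
  have hgc : ∀ i j, Continuous (Gram G i j) := by
    intro i j
    unfold Gram
    exact continuous_finsetSum _ fun l _ =>
      (Complex.continuous_conj.comp (hG l i)).mul (hG l j)
  have h1 : ∀ p q : ℕ × Fin 2,
      (starRingEnd ℂ) (x p) * (x q * cf (Gram G p.2 q.2) ((p.1 : ℤ) - q.1)) =
      ((2 * Real.pi : ℝ) : ℂ)⁻¹ * ∫ t in (0 : ℝ)..(2 * Real.pi),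
        (starRingEnd ℂ) (x p) * (x q * (Gram G p.2 q.2 t * ex (-((p.1 : ℤ) - q.1)) t)) := by
    intro p q
    rw [cf, intervalIntegral.integral_const_mul, intervalIntegral.integral_const_mul]
    ring
  simp only [h1]
  simp only [← Finset.mul_sum]
  push_cast
  rw [← intervalIntegral.integral_ofReal]
  congr 1
  have hii : ∀ p q : ℕ × Fin 2, IntervalIntegrable (fun t =>
      (starRingEnd ℂ) (x p) * (x q * (Gram G p.2 q.2 t * ex (-((p.1 : ℤ) - q.1)) t)))
      MeasureTheory.volume 0 (2 * Real.pi) := fun p q =>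
    (continuous_const.mul (continuous_const.mul
      ((hgc _ _).mul (ex_continuous _)))).intervalIntegrable _ _
  have h2 : ∀ p ∈ s, ∑ q ∈ s, ∫ t in (0 : ℝ)..(2 * Real.pi),
        (starRingEnd ℂ) (x p) * (x q * (Gram G p.2 q.2 t * ex (-((p.1 : ℤ) - q.1)) t)) =
      ∫ t in (0 : ℝ)..(2 * Real.pi), ∑ q ∈ s,
        (starRingEnd ℂ) (x p) * (x q * (Gram G p.2 q.2 t * ex (-((p.1 : ℤ) - q.1)) t)) := by
    intro p _
    rw [intervalIntegral.integral_finsetSum]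
    exact fun q _ => hii p q
  rw [Finset.sum_congr rfl h2, ← intervalIntegral.integral_finsetSum]
  · congr 1
    funext t
    have h3 : ∀ z : ℂ, ((‖z‖ : ℝ) : ℂ) ^ 2 = (starRingEnd ℂ) z * z := fun z => by
      rw [mul_comm, Complex.mul_conj, Complex.normSq_eq_norm_sq]; push_cast; rfl
    push_cast
    simp only [h3, wv, map_sum, Finset.sum_mul_sum]
    conv_rhs => rw [Finset.sum_comm]
    refine Finset.sum_congr rfl fun p _ => ?_
    conv_rhs => rw [Finset.sum_comm]
    refine Finset.sum_congr rfl fun q _ => ?_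
    simp only [map_mul, ex_conj, Gram, Finset.sum_mul, Finset.mul_sum]
    refine Finset.sum_congr rfl fun l _ => ?_
    rw [show -((p.1 : ℤ) - q.1) = -(p.1 : ℤ) + q.1 by ring, ex_add]
    ring
  · intro p _
    exact (continuous_finsetSum _ fun q _ => continuous_const.mul (continuous_const.mul
      ((hgc _ _).mul (ex_continuous _)))).intervalIntegrable _ _

lemma toep_quad (h : Fin 2 → Fin 2 → ℤ → ℂ)
    (hh : ∀ i j, ∀ m : ℕ, Summable fun k : ℤ => |(k : ℝ)| ^ m * ‖h i j k‖)
    (s : Finset (ℕ × Fin 2)) (x : ℕ × Fin 2 → ℂ) :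
    inner ℂ (∑ p ∈ s, lp.single 2 p (x p) : HH) (Toep h 0 (∑ p ∈ s, lp.single 2 p (x p) : HH)) =
    ∑ p ∈ s, ∑ q ∈ s, (starRingEnd ℂ) (x p) * (x q * h p.2 q.2 ((p.1 : ℤ) - q.1)) := by
  rw [sum_inner]
  refine Finset.sum_congr rfl fun p _ => ?_
  rw [map_sum, inner_sum]
  refine Finset.sum_congr rfl fun q _ => ?_
  have : (lp.single 2 q (x q) : HH) = x q • lp.single 2 q (1 : ℂ) := by
    rw [← lp.single_smul]; simp
  rw [this, map_smul, inner_smul_right, lp.inner_single_left, Toep_single h hh]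
  simp only [RCLike.inner_apply]
  ring

lemma single_norm_quad (s : Finset (ℕ × Fin 2)) (x : ℕ × Fin 2 → ℂ) :
    ((‖(∑ p ∈ s, lp.single 2 p (x p) : HH)‖ ^ 2 : ℝ) : ℂ) =
    ∑ p ∈ s, ∑ q ∈ s, (starRingEnd ℂ) (x p) *
      (x q * cf (Gram (fun i j _ => if i = j then 1 else 0) p.2 q.2) ((p.1 : ℤ) - q.1)) := by
  have h1 := lp.norm_sum_single (p := 2) (E := fun _ : ℕ × Fin 2 => ℂ) (by simp) x s
  simp only [ENNReal.toReal_ofNat, Real.rpow_ofNat] at h1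
  rw [h1]
  push_cast
  refine Finset.sum_congr rfl fun p hp => ?_
  have h2 : ∀ q : ℕ × Fin 2,
      cf (Gram (fun i j _ => if i = j then 1 else 0) p.2 q.2) ((p.1 : ℤ) - q.1) =
      if p = q then 1 else 0 := by
    intro q
    have h3 : Gram (fun i j _ => if i = j then 1 else 0) p.2 q.2 =
        fun _ => if p.2 = q.2 then 1 else 0 := by
      funext t
      simp [Gram, eq_comm]
    rw [h3]
    by_cases h4 : p.2 = q.2
    · simp only [h4, if_true, cf_one, sub_eq_zero, Nat.cast_inj, Prod.ext_iff, and_true]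
    · have : p ≠ q := fun h => h4 (by rw [h])
      simp [h4, this, cf]
  simp only [h2, mul_ite, mul_one, mul_zero, Finset.sum_ite_eq, hp, if_true]
  rw [mul_comm, Complex.mul_conj, Complex.normSq_eq_norm_sq]; push_cast; rfl

/-- Pointwise coercivity. -/
lemma pointwise_coercive (a b c d v0 v1 : ℂ) (M : ℝ) (ha : ‖a‖ ≤ M) (hb : ‖b‖ ≤ M)
    (hc : ‖c‖ ≤ M) (hd : ‖d‖ ≤ M) (hdet : a * d - b * c = 1) :
    ‖v0‖ ^ 2 + ‖v1‖ ^ 2 ≤ 4 * M ^ 2 * (‖a * v0 + b * v1‖ ^ 2 + ‖c * v0 + d * v1‖ ^ 2) := by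
  set w0 := a * v0 + b * v1 with hw0
  set w1 := c * v0 + d * v1 with hw1
  have e0 : v0 = d * w0 - b * w1 := by rw [hw0, hw1]; linear_combination (-v0) * hdet
  have e1 : v1 = a * w1 - c * w0 := by rw [hw0, hw1]; linear_combination (-v1) * hdet
  have hM : 0 ≤ M := (norm_nonneg a).trans ha
  have key : ∀ u v : ℂ, ‖u‖ ≤ M → ‖v‖ ≤ M → ∀ x y : ℂ,
      ‖u * x - v * y‖ ^ 2 ≤ 2 * M ^ 2 * (‖x‖ ^ 2 + ‖y‖ ^ 2) := by
    intro u v hu hv x y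
    have h1 : ‖u * x - v * y‖ ≤ M * (‖x‖ + ‖y‖) := by
      refine (norm_sub_le _ _).trans ?_
      rw [norm_mul, norm_mul, mul_add]
      gcongr
    calc ‖u * x - v * y‖ ^ 2 ≤ (M * (‖x‖ + ‖y‖)) ^ 2 := by gcongr
      _ = M ^ 2 * (‖x‖ + ‖y‖) ^ 2 := by ring
      _ ≤ M ^ 2 * (2 * (‖x‖ ^ 2 + ‖y‖ ^ 2)) := by
        gcongr
        nlinarith [sq_nonneg (‖x‖ - ‖y‖)]
      _ = _ := by ring
  have k0 := key d b hd hb w0 w1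
  have k1 := key a c ha hc w1 w0
  rw [← e0] at k0
  rw [← e1] at k1
  linarith

lemma toep_coercive (G : Fin 2 → Fin 2 → ℝ → ℂ) (hG : ∀ i j, Continuous (G i j))
    (hdet : ∀ t, G 0 0 t * G 1 1 t - G 0 1 t * G 1 0 t = 1)
    (hh : ∀ i j, ∀ m : ℕ, Summable fun k : ℤ => |(k : ℝ)| ^ m * ‖cf (Gram G i j) k‖) :
    ∃ c : ℝ, 0 < c ∧ ∀ x : HH, c * ‖x‖ ^ 2 ≤
      (inner ℂ x (Toep (fun i j => cf (Gram G i j)) 0 x)).re := by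
  have hb : ∃ M : ℝ, 0 < M ∧ ∀ i j, ∀ t ∈ Set.Icc 0 (2 * Real.pi), ‖G i j t‖ ≤ M := by
    have : ∀ i j, ∃ C, ∀ t ∈ Set.Icc 0 (2 * Real.pi), ‖G i j t‖ ≤ C := fun i j =>
      isCompact_Icc.exists_bound_of_continuousOn (hG i j).continuousOn
    choose C hC using this
    refine ⟨1 + ∑ i, ∑ j, |C i j|, by positivity, fun i j t ht => ?_⟩
    have h1 : |C i j| ≤ ∑ j, |C i j| :=
      Finset.single_le_sum (f := fun j => |C i j|) (fun _ _ => abs_nonneg _) (Finset.mem_univ j)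
    have h2 : ∑ j, |C i j| ≤ ∑ i, ∑ j, |C i j| :=
      Finset.single_le_sum (f := fun i => ∑ j, |C i j|)
        (fun _ _ => Finset.sum_nonneg fun _ _ => abs_nonneg _) (Finset.mem_univ i)
    linarith [hC i j t ht, le_abs_self (C i j)]
  obtain ⟨M, hM, hMb⟩ := hb
  refine ⟨(4 * M ^ 2)⁻¹, by positivity, ?_⟩
  have hfin : ∀ (s : Finset (ℕ × Fin 2)) (x : ℕ × Fin 2 → ℂ),
      (4 * M ^ 2)⁻¹ * ‖(∑ p ∈ s, lp.single 2 p (x p) : HH)‖ ^ 2 ≤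
      (inner ℂ (∑ p ∈ s, lp.single 2 p (x p) : HH)
        (Toep (fun i j => cf (Gram G i j)) 0 (∑ p ∈ s, lp.single 2 p (x p) : HH))).re := by
    intro s x
    rw [toep_quad _ hh, gram_quad G hG, Complex.ofReal_re]
    have h1 := single_norm_quad s x
    rw [gram_quad _ (fun i j => continuous_const)] at h1
    rw [Complex.ofReal_inj.1 h1]
    have hwc : ∀ (G : Fin 2 → Fin 2 → ℝ → ℂ) (_ : ∀ i j, Continuous (G i j)),
        Continuous fun t => ∑ l, ‖wv G s x l t‖ ^ 2 := by
      intro G hG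
      refine continuous_finsetSum _ fun l _ => ?_
      refine (Continuous.norm ?_).pow 2
      unfold wv
      exact continuous_finsetSum _ fun q _ =>
        (hG _ _).mul (continuous_const.mul (ex_continuous _))
    have h2 : ∫ t in (0 : ℝ)..(2 * Real.pi),
        ∑ l, ‖wv (fun i j _ => if i = j then 1 else 0) s x l t‖ ^ 2 ≤
        ∫ t in (0 : ℝ)..(2 * Real.pi), 4 * M ^ 2 * ∑ l, ‖wv G s x l t‖ ^ 2 := by
      refine intervalIntegral.integral_mono_on (by positivity)
        ((hwc _ fun i j => continuous_const).intervalIntegrable _ _)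
        ((continuous_const.mul (hwc G hG)).intervalIntegrable _ _) ?_
      intro t ht
      have h3 : ∀ l, wv G s x l t = ∑ j, G l j t *
          wv (fun i j _ => if i = j then 1 else 0) s x j t := by
        intro l
        simp only [wv, Finset.mul_sum]
        rw [Finset.sum_comm]
        refine Finset.sum_congr rfl fun q _ => ?_
        simp
      simp only [Fin.sum_univ_two, h3]
      exact pointwise_coercive _ _ _ _ _ _ M (hMb 0 0 t ht) (hMb 0 1 t ht) (hMb 1 0 t ht)
        (hMb 1 1 t ht) (hdet t)
    rw [intervalIntegral.integral_const_mul] at h2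
    have hpi : (0 : ℝ) < (2 * Real.pi)⁻¹ := by positivity
    rw [inv_mul_le_iff₀ (by positivity)]
    calc _ ≤ (2 * Real.pi)⁻¹ * (4 * M ^ 2 * ∫ t in (0 : ℝ)..(2 * Real.pi),
          ∑ l, ‖wv G s x l t‖ ^ 2) := by gcongr
      _ = _ := by ring
  intro x
  have hx := lp.hasSum_single (by simp) x
  have hcl : IsClosed {y : HH | (4 * M ^ 2)⁻¹ * ‖y‖ ^ 2 ≤
      (inner ℂ y (Toep (fun i j => cf (Gram G i j)) 0 y)).re} := by
    refine isClosed_le (by fun_prop) ?_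
    exact Complex.continuous_re.comp (continuous_id.inner (ContinuousLinearMap.continuous _))
  exact hcl.mem_of_tendsto hx (Filter.Eventually.of_forall fun s => hfin s _)


/-! ### Holomorphic functions on the disc -/

/-- Holomorphic on the open unit disc and continuous on the closed disc. -/
abbrev Hol (f : ℂ → ℂ) : Prop := DiffContOnCl ℂ f (Metric.ball 0 1)

lemma hol_iff (f : ℂ → ℂ) : Hol f ↔
    ContinuousOn f (Metric.closedBall 0 1) ∧ DifferentiableOn ℂ f (Metric.ball 0 1) := by
  constructor
  · intro h
    exact ⟨by simpa [closure_ball (0 : ℂ) one_ne_zero] using h.continuousOn, h.differentiableOn⟩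
  · rintro ⟨h1, h2⟩
    exact ⟨h2, by rwa [closure_ball (0 : ℂ) one_ne_zero]⟩

lemma Hol.mul' {f g : ℂ → ℂ} (hf : Hol f) (hg : Hol g) : Hol (fun z => f z * g z) :=
  hf.smul hg

lemma Hol.add' {f g : ℂ → ℂ} (hf : Hol f) (hg : Hol g) : Hol (fun z => f z + g z) :=
  DiffContOnCl.add hf hg

lemma Hol.sub' {f g : ℂ → ℂ} (hf : Hol f) (hg : Hol g) : Hol (fun z => f z - g z) :=
  DiffContOnCl.sub hf hg

lemma Hol.neg' {f : ℂ → ℂ} (hf : Hol f) : Hol (fun z => - f z) :=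
  DiffContOnCl.neg hf

lemma Hol.comp_neg {f : ℂ → ℂ} (hf : Hol f) : Hol (fun z => f (-z)) := by
  rw [hol_iff] at hf ⊢
  refine ⟨hf.1.comp continuous_neg.continuousOn ?_,
    hf.2.comp differentiable_neg.differentiableOn ?_⟩
  · intro z hz; simpa using hz
  · intro z hz; simpa using hz

lemma hol_real_const {u : ℂ → ℂ} (hu : Hol u) (h : ∀ z : ℂ, ‖z‖ = 1 → (u z).im = 0) :
    ∀ z ∈ Metric.closedBall (0 : ℂ) 1, u z = u 0 := by
  have key : ∀ c : ℂ, c.re = 0 → ∀ z ∈ Metric.closedBall (0 : ℂ) 1,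
      ‖Complex.exp (c * u z)‖ ≤ 1 := by
    intro c hc z hz
    have hd : DiffContOnCl ℂ (fun z => Complex.exp (c * u z)) (Metric.ball (0 : ℂ) 1) := by
      have := hol_iff u |>.1 hu
      rw [show DiffContOnCl ℂ (fun z => Complex.exp (c * u z)) (Metric.ball (0 : ℂ) 1) =
        Hol _ from rfl, hol_iff]
      exact ⟨(continuousOn_const.mul this.1).cexp, (this.2.const_mul c).cexp⟩
    refine Complex.norm_le_of_forall_mem_frontier_norm_le Metric.isBounded_ball hd ?_
      (by rwa [closure_ball (0 : ℂ) one_ne_zero])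
    intro w hw
    rw [frontier_ball (0 : ℂ) one_ne_zero] at hw
    have hw1 : ‖w‖ = 1 := by simpa using hw
    rw [Complex.norm_exp, Complex.mul_re, hc, h w hw1]
    simp
  have him : ∀ z ∈ Metric.closedBall (0 : ℂ) 1, (u z).im = 0 := by
    intro z hz
    have h1 := key Complex.I (by simp) z hz
    have h2 := key (-Complex.I) (by simp) z hz
    rw [Complex.norm_exp, Real.exp_le_one_iff] at h1 h2
    simp at h1 h2
    linarith
  -- on the open ball, `exp (i u)` has constant modulus one
  have hconst : ∀ z ∈ Metric.ball (0 : ℂ) 1, u z = u 0 := by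
    have hd := hu.differentiableOn
    have hv : DifferentiableOn ℂ (fun z => Complex.exp (Complex.I * u z))
        (Metric.ball (0 : ℂ) 1) := (hd.const_mul _).cexp
    have hn : ∀ z ∈ Metric.ball (0 : ℂ) 1, ‖Complex.exp (Complex.I * u z)‖ = 1 := by
      intro z hz
      rw [Complex.norm_exp]
      simp [him z (Metric.ball_subset_closedBall hz)]
    have h0 : (0 : ℂ) ∈ Metric.ball (0 : ℂ) 1 := by simp
    have hE : Set.EqOn (fun z => Complex.exp (Complex.I * u z))
        (Function.const ℂ (Complex.exp (Complex.I * u 0))) (Metric.ball (0 : ℂ) 1) := by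
      refine Complex.eqOn_of_isPreconnected_of_isMaxOn_norm
        (convex_ball (0 : ℂ) 1).isPreconnected Metric.isOpen_ball hv h0 ?_
      intro z hz
      simp only [Function.comp, Set.mem_ofPred_eq]
      rw [hn z hz, hn 0 h0]
    have hder : ∀ z ∈ Metric.ball (0 : ℂ) 1, deriv u z = 0 := by
      intro z hz
      have hda := (hd.differentiableAt (Metric.isOpen_ball.mem_nhds hz)).hasDerivAt
      have h1 := (hda.const_mul Complex.I).cexp
      have h2 : HasDerivAt (fun z => Complex.exp (Complex.I * u z)) 0 z :=
        (hasDerivAt_const z (Complex.exp (Complex.I * u 0))).congr_of_eventuallyEq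
          (hE.eventuallyEq_of_mem (Metric.isOpen_ball.mem_nhds hz))
      have h3 := h1.unique h2
      simpa [Complex.exp_ne_zero] using h3
    intro z hz
    exact Metric.isOpen_ball.is_const_of_deriv_eq_zero (convex_ball (0 : ℂ) 1).isPreconnected
      hd (fun w hw => hder w hw) hz h0
  intro z hz
  have hcl : Set.EqOn u (fun _ => u 0) (closure (Metric.ball (0 : ℂ) 1)) :=
    Set.EqOn.of_subset_closure (s := Metric.ball (0 : ℂ) 1) (fun w hw => hconst w hw)
      hu.continuousOn continuousOn_const subset_closure subset_rfl
  exact hcl (by rwa [closure_ball (0 : ℂ) one_ne_zero])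

lemma hol_conj_const {f k : ℂ → ℂ} (hf : Hol f) (hk : Hol k)
    (h : ∀ z : ℂ, ‖z‖ = 1 → f z = (starRingEnd ℂ) (k z)) :
    ∀ z ∈ Metric.closedBall (0 : ℂ) 1, f z = f 0 := by
  have h1 := hol_real_const (hf.add' hk) (by
    intro z hz
    rw [h z hz]; simp)
  have h2 := hol_real_const (u := fun z => Complex.I * (f z - k z))
    ((hf.sub' hk).const_smul Complex.I) (by
    intro z hz
    rw [h z hz]; simp)
  intro z hz
  have e1 := h1 z hz
  have e2 := mul_left_cancel₀ Complex.I_ne_zero (h2 z hz)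
  linear_combination (e1 + e2) / 2

/-- Power series. -/
def ps (a : ℕ → ℂ) (z : ℂ) : ℂ := ∑' n, a n * z ^ n

lemma ps_bound (a : ℕ → ℂ) (n : ℕ) (z : ℂ) (hz : z ∈ Metric.closedBall (0 : ℂ) 1) :
    ‖a n * z ^ n‖ ≤ ‖a n‖ := by
  rw [norm_mul, norm_pow]
  have : ‖z‖ ≤ 1 := by simpa using hz
  exact mul_le_of_le_one_right (norm_nonneg _) (pow_le_one₀ (norm_nonneg _) this)

lemma ps_hol (a : ℕ → ℂ) (ha : Summable fun n => ‖a n‖) : Hol (ps a) := by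
  rw [hol_iff]
  constructor
  · exact continuousOn_tsum (fun n => by fun_prop) ha (fun n z hz => ps_bound a n z hz)
  · refine Complex.differentiableOn_tsum_of_summable_norm ha (fun n => by fun_prop)
      Metric.isOpen_ball (fun n z hz => ps_bound a n z (Metric.ball_subset_closedBall hz))

lemma ps_zero (a : ℕ → ℂ) : ps a 0 = a 0 := by
  rw [ps, tsum_eq_single 0]
  · simp
  · intro n hn; simp [hn]

lemma ps_circle (a : ℕ → ℂ) (t : ℝ) :
    ps a (Complex.exp (Complex.I * t)) = ∑' n : ℕ, ex n t • a n := by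
  rw [ps]; congr 1; funext n; rw [ex_nat, smul_eq_mul, mul_comm]

lemma ps_circle_hasSum (a : ℕ → ℂ) (ha : Summable fun n => ‖a n‖) (t : ℝ) :
    HasSum (fun n : ℕ => a n * ex n t) (ps a (Complex.exp (Complex.I * t))) := by
  have : Summable fun n : ℕ => a n * ex n t := by
    apply Summable.of_norm
    simpa [norm_ex] using ha
  convert! this.hasSum using 1
  rw [ps_circle]; congr 1; funext n; rw [smul_eq_mul, mul_comm]

lemma ps_contDiff (a : ℕ → ℂ) (ha : ∀ m : ℕ, Summable fun n : ℕ => (n : ℝ) ^ m * ‖a n‖) :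
    ContDiff ℝ (⊤ : ℕ∞) (fun t : ℝ => ps a (Complex.exp (Complex.I * t))) := by
  simp only [ps_circle]
  exact contDiff_fourier_tsum (fun n : ℕ => (n : ℤ)) a (by simpa using ha)

lemma summable_of_decay_nat {a : ℕ → ℝ} (ha : ∀ k, 0 ≤ a k)
    (h : ∀ m : ℕ, ∃ C : ℝ, ∀ k : ℕ, (k : ℝ) ^ m * a k ≤ C) (m : ℕ) :
    Summable fun k : ℕ => (k : ℝ) ^ m * a k := by
  obtain ⟨C, hC⟩ := h (m + 2)
  have hs : Summable fun k : ℕ => C * (1 / (k : ℝ) ^ 2) :=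
    (Real.summable_one_div_nat_pow.2 (by norm_num)).mul_left C
  refine Summable.of_norm_bounded_eventually hs ?_
  have : {k : ℕ | ¬ ‖(k : ℝ) ^ m * a k‖ ≤ C * (1 / (k : ℝ) ^ 2)} ⊆ {0} := by
    intro k hk
    by_contra h0
    apply hk
    have hk0 : (k : ℝ) ≠ 0 := by exact_mod_cast h0
    rw [Real.norm_of_nonneg (mul_nonneg (by positivity) (ha k)), mul_one_div,
      le_div_iff₀ (by positivity)]
    refine le_trans (le_of_eq ?_) (hC k)
    rw [pow_add]; ring
  exact (Set.finite_singleton 0).subset this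

lemma cf_mul_ps (K : ℝ → ℂ) (hK : Continuous K) (a : ℕ → ℂ) (ha : Summable fun n => ‖a n‖)
    (m : ℤ) :
    HasSum (fun n : ℕ => a n * cf K (m - n))
      (cf (fun t => K t * ps a (Complex.exp (Complex.I * t))) m) := by
  obtain ⟨M, hM⟩ := isCompact_Icc.exists_bound_of_continuousOn
      (hK.continuousOn (s := Set.Icc 0 (2 * Real.pi)))
  have h1 : HasSum (fun n : ℕ => ∫ t in (0 : ℝ)..(2 * Real.pi), a n * (K t * ex (-(m - n)) t))
      (∫ t in (0 : ℝ)..(2 * Real.pi), K t * ps a (Complex.exp (Complex.I * t)) * ex (-m) t) := by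
    refine intervalIntegral.hasSum_integral_of_dominated_convergence
      (fun n _ => M * ‖a n‖) ?_ ?_ ?_ ?_ ?_
    · intro n
      exact (continuous_const.mul (hK.mul (ex_continuous _))).aestronglyMeasurable
    · intro n
      refine Filter.Eventually.of_forall fun t ht => ?_
      rw [Set.uIoc_of_le (by positivity)] at ht
      rw [norm_mul, norm_mul, norm_ex, mul_one, mul_comm]
      exact mul_le_mul_of_nonneg_right (hM t ⟨ht.1.le, ht.2⟩) (norm_nonneg _)
    · exact Filter.Eventually.of_forall fun t _ => ha.mul_left M
    · exact continuous_const.intervalIntegrable _ _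
    · refine Filter.Eventually.of_forall fun t _ => ?_
      have h2 := ((ps_circle_hasSum a ha t).mul_left (K t)).mul_right (ex (-m) t)
      convert! h2 using 1
      funext n
      rw [show -(m - (n : ℤ)) = n + -m by ring, ex_add]
      ring
  have h3 := h1.mul_left ((2 * Real.pi : ℝ) : ℂ)⁻¹
  convert! h3 using 1
  funext n
  rw [cf, intervalIntegral.integral_const_mul]
  ring

lemma cf_add (f g : ℝ → ℂ) (hf : Continuous f) (hg : Continuous g) (k : ℤ) :
    cf (fun t => f t + g t) k = cf f k + cf g k := by
  have hf' : IntervalIntegrable (fun t => f t * ex (-k) t) MeasureTheory.volume 0 (2 * Real.pi) :=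
    (hf.mul (ex_continuous _)).intervalIntegrable _ _
  have hg' : IntervalIntegrable (fun t => g t * ex (-k) t) MeasureTheory.volume 0 (2 * Real.pi) :=
    (hg.mul (ex_continuous _)).intervalIntegrable _ _
  rw [cf, cf, cf, ← mul_add, ← intervalIntegral.integral_add hf' hg']
  simp only [add_mul]

/-- A smooth periodic function without positive Fourier modes is the complex conjugate of the
boundary value of a holomorphic function. -/
lemma antihol_ext (f : ℝ → ℂ) (hf : ContDiff ℝ (⊤ : ℕ∞) f)
    (hp : Function.Periodic f (2 * Real.pi)) (h : ∀ n : ℕ, 0 < n → cf f n = 0) :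
    ∃ y : ℂ → ℂ, Hol y ∧ y 0 = (starRingEnd ℂ) (cf f 0) ∧
      ∀ t : ℝ, f t = (starRingEnd ℂ) (y (Complex.exp (Complex.I * t))) := by
  have hs : Summable fun n : ℕ => ‖(starRingEnd ℂ) (cf f (-(n : ℤ)))‖ := by
    have h1 := cf_summable f hf hp 0
    have hinj : Function.Injective (fun n : ℕ => -(n : ℤ)) := fun a b hab => by
      simpa using hab
    have h2 := h1.comp_injective hinj
    simpa [Function.comp_def] using h2
  refine ⟨ps fun n => (starRingEnd ℂ) (cf f (-(n : ℤ))), ps_hol _ hs, ?_, ?_⟩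
  · rw [ps_zero]; simp
  · intro t
    have h1 := cf_hasSum f hf hp t
    have hinj : Function.Injective (fun n : ℕ => -(n : ℤ)) := fun a b hab => by
      simpa using hab
    rw [← hinj.hasSum_iff] at h1
    · have h2 := (ps_circle_hasSum _ hs t).map (starRingEnd ℂ) Complex.continuous_conj
      refine h1.unique ?_
      convert! h2 using 1
      funext n
      simp [ex_conj]
    · intro k hk
      have : 0 < k := by
        by_contra hneg
        exact hk ⟨(-k).toNat, by simp; omega⟩
      obtain ⟨n, rfl⟩ := Int.eq_ofNat_of_zero_le this.le
      rw [h n (by exact_mod_cast this), zero_mul]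

lemma circle_periodic (φ : ℂ → ℂ) :
    Function.Periodic (fun t : ℝ => φ (Complex.exp (Complex.I * t))) (2 * Real.pi) := by
  intro t
  have := ex_periodic 1 t
  simp only [ex, Int.cast_one, one_mul] at this
  simp only [this]

/-- Birkhoff-type factorization of the Gram matrix. -/
theorem birkhoff (G : Fin 2 → Fin 2 → ℝ → ℂ) (hG : ∀ i j, ContDiff ℝ (⊤ : ℕ∞) (G i j))
    (hper : ∀ i j, Function.Periodic (G i j) (2 * Real.pi))
    (hdet : ∀ t, G 0 0 t * G 1 1 t - G 0 1 t * G 1 0 t = 1) :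
    ∃ X Y : Fin 2 → Fin 2 → ℂ → ℂ, (∀ i j, Hol (X i j)) ∧ (∀ i j, Hol (Y i j)) ∧
      (∀ i j, ContDiff ℝ (⊤ : ℕ∞) (fun t : ℝ => X i j (Complex.exp (Complex.I * t)))) ∧
      (∀ i j, Y i j 0 = if i = j then 1 else 0) ∧
      ∀ i j, ∀ t : ℝ, ∑ l, Gram G i l t * X l j (Complex.exp (Complex.I * t)) =
        (starRingEnd ℂ) (Y j i (Complex.exp (Complex.I * t))) := by
  have hGr : ∀ i j, ContDiff ℝ (⊤ : ℕ∞) (Gram G i j) := by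
    intro i j
    unfold Gram
    exact ContDiff.sum fun l _ => (Complex.conjCLE.contDiff.comp (hG l i)).mul (hG l j)
  have hGp : ∀ i j, Function.Periodic (Gram G i j) (2 * Real.pi) := by
    intro i j t
    simp only [Gram, hper _ _ t]
  have hh : ∀ i j, ∀ m : ℕ, Summable fun k : ℤ => |(k : ℝ)| ^ m * ‖cf (Gram G i j) k‖ :=
    fun i j m => cf_summable _ (hGr i j) (hGp i j) m
  obtain ⟨c, hc, hco⟩ := toep_coercive G (fun i j => (hG i j).continuous) hdet hh
  choose x hx hxd using toeplitz_solve (fun i j => cf (Gram G i j)) hh c hc hco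
  have hxs : ∀ i j, ∀ m : ℕ, Summable fun n : ℕ => (n : ℝ) ^ m * ‖x j (n, i)‖ := by
    intro i j m
    refine summable_of_decay_nat (fun _ => norm_nonneg _) (fun m => ?_) m
    obtain ⟨C, hC⟩ := hxd j m
    exact ⟨C, fun k => hC (k, i)⟩
  have hxs0 : ∀ i j, Summable fun n : ℕ => ‖x j (n, i)‖ := fun i j => by
    simpa using hxs i j 0
  let X : Fin 2 → Fin 2 → ℂ → ℂ := fun i j => ps fun n => x j (n, i)
  have hXs : ∀ i j, ContDiff ℝ (⊤ : ℕ∞) (fun t : ℝ => X i j (Complex.exp (Complex.I * t))) :=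
    fun i j => ps_contDiff _ (hxs i j)
  let φ : Fin 2 → Fin 2 → ℝ → ℂ := fun i j t =>
    ∑ l, Gram G i l t * X l j (Complex.exp (Complex.I * t))
  have hφs : ∀ i j, ContDiff ℝ (⊤ : ℕ∞) (φ i j) := fun i j =>
    ContDiff.sum fun l _ => (hGr i l).mul (hXs l j)
  have hφp : ∀ i j, Function.Periodic (φ i j) (2 * Real.pi) := by
    intro i j t
    have := fun l => circle_periodic (X l j) t
    simp only [] at this
    simp only [φ, hGp _ _ t, this]
  have hφc : ∀ i j, ∀ m : ℕ, cf (φ i j) m = if m = 0 ∧ i = j then 1 else 0 := by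
    intro i j m
    have h1 := Toep_apply (fun i j => cf (Gram G i j)) hh (x j) (m, i)
    rw [hx j] at h1
    have h2 := h1.prod_fiberwise (fun n => hasSum_fintype _)
    have h3 := hasSum_sum (s := Finset.univ) (fun l _ =>
      cf_mul_ps (Gram G i l) (hGr i l).continuous (fun n => x j (n, l)) (hxs0 l j) m)
    have h4 := h2.unique h3
    have h5 : cf (φ i j) m = ∑ l, cf (fun t => Gram G i l t *
        ps (fun n => x j (n, l)) (Complex.exp (Complex.I * t))) m := by
      simp only [φ, Fin.sum_univ_two]
      exact cf_add _ _ ((hGr i 0).mul (hXs 0 j)).continuous ((hGr i 1).mul (hXs 1 j)).continuous _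
    rw [h5, ← h4, lp.single_apply, Pi.single_apply]
    simp
  have hY : ∀ i j, ∃ y : ℂ → ℂ, Hol y ∧ y 0 = (starRingEnd ℂ) (cf (φ i j) 0) ∧
      ∀ t : ℝ, φ i j t = (starRingEnd ℂ) (y (Complex.exp (Complex.I * t))) := fun i j =>
    antihol_ext (φ i j) (hφs i j) (hφp i j) (fun n hn => by
      rw [hφc i j n, if_neg (by omega)])
  choose Y hY1 hY2 hY3 using hY
  refine ⟨X, fun i j => Y j i, fun i j => ps_hol _ (hxs0 i j), fun i j => hY1 j i, hXs, ?_, ?_⟩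
  · intro i j
    have := hφc j i 0
    simp only [Nat.cast_zero, true_and] at this
    change Y j i 0 = _
    rw [hY2, this, apply_ite (starRingEnd ℂ)]
    simp [eq_comm]
  · intro i j t
    exact hY3 i j t


/-! ### Matrix-valued maps -/

/-- Matrix-valued version of `Hol`. -/
def MHol (A : ℂ → M2) : Prop := ∀ i j, Hol (fun z => A z i j)

lemma MHol.mul {A B : ℂ → M2} (hA : MHol A) (hB : MHol B) : MHol (fun z => A z * B z) := by
  intro i j
  simp only [Matrix.mul_apply, Fin.sum_univ_two]
  exact ((hA i 0).mul' (hB 0 j)).add' ((hA i 1).mul' (hB 1 j))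

lemma MHol.const (A : M2) : MHol (fun _ => A) := fun _ _ => diffContOnCl_const

lemma MHol.comp_neg {A : ℂ → M2} (hA : MHol A) : MHol (fun z => A (-z)) :=
  fun i j => Hol.comp_neg (hA i j)

lemma MHol.adj {A : ℂ → M2} (hA : MHol A) : MHol (fun z => (A z).adjugate) := by
  intro i j
  fin_cases i <;> fin_cases j <;> simp only [Matrix.adjugate_fin_two]
  · exact hA 1 1
  · exact (hA 0 1).neg'
  · exact (hA 1 0).neg'
  · exact hA 0 0

lemma MHol.det {A : ℂ → M2} (hA : MHol A) : Hol (fun z => (A z).det) := by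
  simp only [Matrix.det_fin_two]
  exact ((hA 0 0).mul' (hA 1 1)).sub' ((hA 0 1).mul' (hA 1 0))

lemma mhol_conj_const {A K : ℂ → M2} (hA : MHol A) (hK : MHol K)
    (h : ∀ z : ℂ, ‖z‖ = 1 → A z = (K z)ᴴ) :
    ∀ z ∈ Metric.closedBall (0 : ℂ) 1, A z = A 0 := by
  intro z hz
  ext i j
  refine hol_conj_const (hA i j) (hK j i) (fun w hw => ?_) z hz
  rw [h w hw, Matrix.conjTranspose_apply]; rfl

lemma mhol_conj_one {A K : ℂ → M2} (hA : MHol A) (hK : MHol K)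
    (h : ∀ z : ℂ, ‖z‖ = 1 → A z = (K z)ᴴ) (h0 : K 0 = 1) :
    ∀ z ∈ Metric.closedBall (0 : ℂ) 1, A z = 1 := by
  intro z hz
  have h1 := mhol_conj_const hA hK h
  have h2 := mhol_conj_const hK hA (fun w hw => by rw [h w hw, conjTranspose_conjTranspose])
  have m1 : (1 : ℂ) ∈ Metric.closedBall (0 : ℂ) 1 := by simp
  rw [h1 z hz, ← h1 1 m1, h 1 (by simp), h2 1 m1, h0, conjTranspose_one]

lemma hol_conj_one {f k : ℂ → ℂ} (hf : Hol f) (hk : Hol k)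
    (h : ∀ z : ℂ, ‖z‖ = 1 → f z = (starRingEnd ℂ) (k z)) (h0 : k 0 = 1) :
    ∀ z ∈ Metric.closedBall (0 : ℂ) 1, f z = 1 := by
  intro z hz
  have h1 := hol_conj_const hf hk h
  have h2 := hol_conj_const hk hf (fun w hw => by rw [h w hw, Complex.conj_conj])
  have m1 : (1 : ℂ) ∈ Metric.closedBall (0 : ℂ) 1 := by simp
  rw [h1 z hz, ← h1 1 m1, h 1 (by simp), h2 1 m1, h0, map_one]

lemma matrix_sum_single (A : M2) :
    A = A 0 0 • !![1, 0; 0, 0] + A 0 1 • !![0, 1; 0, 0] + A 1 0 • !![0, 0; 1, 0]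
      + A 1 1 • !![0, 0; 0, 1] := by
  ext i j
  fin_cases i <;> fin_cases j <;> simp

lemma MHol.continuousOn {A : ℂ → M2} (hA : MHol A) :
    ContinuousOn A (Metric.closedBall (0 : ℂ) 1) := by
  have h := fun i j => ((hol_iff _).1 (hA i j)).1
  rw [show A = fun z => _ from funext fun z => matrix_sum_single (A z)]
  exact ((((h 0 0).smul continuousOn_const).add ((h 0 1).smul continuousOn_const)).add
    ((h 1 0).smul continuousOn_const)).add ((h 1 1).smul continuousOn_const)

lemma MHol.differentiableOn {A : ℂ → M2} (hA : MHol A) :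
    DifferentiableOn ℂ A (Metric.ball (0 : ℂ) 1) := by
  have h := fun i j => ((hol_iff _).1 (hA i j)).2
  rw [show A = fun z => _ from funext fun z => matrix_sum_single (A z)]
  exact ((((h 0 0).smul_const _).add ((h 0 1).smul_const _)).add
    ((h 1 0).smul_const _)).add ((h 1 1).smul_const _)

/-- Entry map as a continuous linear map. -/
def entryL (i j : Fin 2) : M2 →L[ℂ] ℂ :=
  LinearMap.toContinuousLinearMap
    { toFun := fun A => A i j
      map_add' := fun _ _ => rfl
      map_smul' := fun _ _ => rfl }

lemma entryL_apply (i j : Fin 2) (A : M2) : entryL i j A = A i j := rfl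

lemma mhol_of {A : ℂ → M2} (h1 : ContinuousOn A (Metric.closedBall (0 : ℂ) 1))
    (h2 : DifferentiableOn ℂ A (Metric.ball (0 : ℂ) 1)) : MHol A := by
  intro i j
  rw [hol_iff]
  exact ⟨(entryL i j).continuous.comp_continuousOn h1,
    (entryL i j).differentiable.comp_differentiableOn h2⟩

lemma contDiff_entry {A : ℝ → M2} (hA : ContDiff ℝ (⊤ : ℕ∞) A) (i j : Fin 2) :
    ContDiff ℝ (⊤ : ℕ∞) (fun t => A t i j) :=
  ((entryL i j).restrictScalars ℝ).contDiff.comp hA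

lemma contDiff_of_entry {A : ℝ → M2} (h : ∀ i j, ContDiff ℝ (⊤ : ℕ∞) (fun t => A t i j)) :
    ContDiff ℝ (⊤ : ℕ∞) A := by
  rw [show A = fun z => _ from funext fun z => matrix_sum_single (A z)]
  exact ((((h 0 0).smul contDiff_const).add ((h 0 1).smul contDiff_const)).add
    ((h 1 0).smul contDiff_const)).add ((h 1 1).smul contDiff_const)

lemma contDiff_mmul {A B : ℝ → M2} (hA : ContDiff ℝ (⊤ : ℕ∞) A) (hB : ContDiff ℝ (⊤ : ℕ∞) B) :
    ContDiff ℝ (⊤ : ℕ∞) (fun t => A t * B t) := by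
  refine contDiff_of_entry fun i j => ?_
  simp only [Matrix.mul_apply, Fin.sum_univ_two]
  exact ((contDiff_entry hA i 0).mul (contDiff_entry hB 0 j)).add
    ((contDiff_entry hA i 1).mul (contDiff_entry hB 1 j))

lemma contDiff_adj {A : ℝ → M2} (hA : ContDiff ℝ (⊤ : ℕ∞) A) :
    ContDiff ℝ (⊤ : ℕ∞) (fun t => (A t).adjugate) := by
  refine contDiff_of_entry fun i j => ?_
  fin_cases i <;> fin_cases j <;> simp only [Matrix.adjugate_fin_two]
  · exact contDiff_entry hA 1 1
  · exact (contDiff_entry hA 0 1).neg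
  · exact (contDiff_entry hA 1 0).neg
  · exact contDiff_entry hA 0 0

lemma circle_param {z : ℂ} (hz : ‖z‖ = 1) : ∃ t : ℝ, Complex.exp (Complex.I * t) = z := by
  refine ⟨z.arg, ?_⟩
  have := Complex.norm_mul_exp_arg_mul_I z
  rw [hz] at this
  rw [mul_comm Complex.I]
  simpa using this

lemma sigma3_sq : sigma3 * sigma3 = 1 := by
  ext i j
  fin_cases i <;> fin_cases j <;> simp [sigma3]

lemma sigma3_conjT : sigma3ᴴ = sigma3 := by
  ext i j
  fin_cases i <;> fin_cases j <;> simp [sigma3]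

lemma sigma3_mul_cancel (A : M2) : sigma3 * (sigma3 * A) = A := by
  rw [← mul_assoc, sigma3_sq, one_mul]

lemma det_sigma (A : M2) : (sigma3 * A * sigma3).det = A.det := by
  rw [Matrix.det_mul, Matrix.det_mul, mul_right_comm, ← Matrix.det_mul, sigma3_sq]; simp

lemma adj_sigma3 : sigma3.adjugate = -sigma3 := by
  ext i j
  fin_cases i <;> fin_cases j <;> simp [sigma3, Matrix.adjugate_fin_two]

lemma adj_sigma (A : M2) : (sigma3 * A * sigma3).adjugate = sigma3 * A.adjugate * sigma3 := by
  rw [Matrix.adjugate_mul_distrib, Matrix.adjugate_mul_distrib, adj_sigma3]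
  simp [mul_assoc]

lemma mul_adj {A : M2} (h : A.det = 1) : A * A.adjugate = 1 := by
  rw [Matrix.mul_adjugate, h, one_smul]

lemma adj_mul {A : M2} (h : A.det = 1) : A.adjugate * A = 1 := by
  rw [Matrix.adjugate_mul, h, one_smul]

lemma det_adj {A : M2} (h : A.det = 1) : A.adjugate.det = 1 := by
  rw [Matrix.det_adjugate, h, one_pow]

/-- Matrix version of `birkhoff`, with the twisting condition. -/
theorem birkhoff_matrix (g : ℂ → M2)
    (hgsm : ContDiff ℝ (⊤ : ℕ∞) (fun t : ℝ => g (Complex.exp (Complex.I * t))))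
    (hgdet : ∀ l : ℂ, ‖l‖ = 1 → (g l).det = 1)
    (hgtw : ∀ l : ℂ, ‖l‖ = 1 → g (-l) = sigma3 * g l * sigma3) :
    ∃ X : ℂ → M2, MHol X ∧
      ContDiff ℝ (⊤ : ℕ∞) (fun t : ℝ => X (Complex.exp (Complex.I * t))) ∧
      (∀ l ∈ Metric.closedBall (0 : ℂ) 1, (X l).det = 1) ∧
      (∀ l ∈ Metric.closedBall (0 : ℂ) 1, X (-l) = sigma3 * X l * sigma3) ∧
      (∀ l : ℂ, ‖l‖ = 1 → (g l * X l)ᴴ * (g l * X l) = X 0) := by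
  obtain ⟨X', Y', hX, hY, hXs, hY0, hXY⟩ := birkhoff
    (fun i j t => g (Complex.exp (Complex.I * t)) i j) (contDiff_entry hgsm)
    (fun i j => circle_periodic (fun z => g z i j))
    (fun t => by
      have := hgdet (Complex.exp (Complex.I * t)) (by rw [mul_comm]; simp [Complex.norm_exp])
      rwa [Matrix.det_fin_two] at this)
  obtain ⟨X, hXdef⟩ : ∃ X : ℂ → M2, ∀ z i j, X z i j = X' i j z := ⟨fun z i j => X' i j z, by simp⟩
  obtain ⟨Y, hYdef⟩ : ∃ Y : ℂ → M2, ∀ z i j, Y z i j = Y' i j z := ⟨fun z i j => Y' i j z, by simp⟩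
  have hXh : MHol X := fun i j => by simpa only [hXdef] using hX i j
  have hYh : MHol Y := fun i j => by simpa only [hYdef] using hY i j
  have hXsm : ContDiff ℝ (⊤ : ℕ∞) (fun t : ℝ => X (Complex.exp (Complex.I * t))) :=
    contDiff_of_entry fun i j => by simpa only [hXdef] using hXs i j
  have hY1 : Y 0 = 1 := by
    ext i j
    rw [hYdef, hY0, Matrix.one_apply]
  have hE : ∀ z : ℂ, ‖z‖ = 1 → (g z)ᴴ * g z * X z = (Y z)ᴴ := by
    intro z hz
    obtain ⟨t, rfl⟩ := circle_param hz
    ext i j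
    rw [Matrix.conjTranspose_apply, hYdef]
    have := hXY i j t
    rw [Matrix.mul_apply]
    simp only [hXdef, Matrix.mul_apply, Matrix.conjTranspose_apply]
    exact this
  clear hXY hXs hY0 hX hY
  have hgd' : ∀ z : ℂ, ‖z‖ = 1 → ((g z)ᴴ * g z).det = 1 := by
    intro z hz
    rw [Matrix.det_mul, Matrix.det_conjTranspose, hgdet z hz]; simp
  have hdd : ∀ z : ℂ, ‖z‖ = 1 → (X z).det = (starRingEnd ℂ) ((Y z).det) := by
    intro z hz
    have := congrArg Matrix.det (hE z hz)
    rw [Matrix.det_mul, hgd' z hz, one_mul, Matrix.det_conjTranspose] at this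
    exact this
  have hXd : ∀ z ∈ Metric.closedBall (0 : ℂ) 1, (X z).det = 1 :=
    hol_conj_one hXh.det hYh.det hdd (by rw [hY1, Matrix.det_one])
  have hsub : ∀ z : ℂ, ‖z‖ = 1 → z ∈ Metric.closedBall (0 : ℂ) 1 := fun z hz => by simp [hz]
  have hYd : ∀ z : ℂ, ‖z‖ = 1 → (Y z).det = 1 := by
    intro z hz
    have h1 := hdd z hz
    rw [hXd z (hsub z hz)] at h1
    have := congrArg (starRingEnd ℂ) h1
    rw [Complex.conj_conj, map_one] at this
    exact this.symm
  refine ⟨X, hXh, hXsm, hXd, ?_, ?_⟩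
  · -- the twisting condition, from uniqueness
    have hX2 : MHol (fun z => sigma3 * X (-z) * sigma3) :=
      ((MHol.const sigma3).mul hXh.comp_neg).mul (MHol.const sigma3)
    have hY2 : MHol (fun z => sigma3 * Y (-z) * sigma3) :=
      ((MHol.const sigma3).mul hYh.comp_neg).mul (MHol.const sigma3)
    have hone := mhol_conj_one (hXh.adj.mul hX2) (hY2.mul hYh.adj) (by
      intro z hz
      have hz' : ‖-z‖ = 1 := by rwa [norm_neg]
      have e1 := hE z hz
      have e2 := hE (-z) hz'
      rw [hgtw z hz] at e2
      have e3 : (g z)ᴴ * g z * (sigma3 * X (-z) * sigma3) = (sigma3 * Y (-z) * sigma3)ᴴ := by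
        simp only [Matrix.conjTranspose_mul, sigma3_conjT, mul_assoc, sigma3_mul_cancel] at e2 ⊢
        rw [← e2]
        simp only [mul_assoc, sigma3_mul_cancel]
      have e4 : (X z).adjugate = ((Y z).adjugate)ᴴ * ((g z)ᴴ * g z) := by
        have : ((Y z).adjugate)ᴴ * (Y z)ᴴ = 1 := by
          rw [← Matrix.conjTranspose_mul, mul_adj (hYd z hz), conjTranspose_one]
        calc (X z).adjugate = (((Y z).adjugate)ᴴ * (Y z)ᴴ) * (X z).adjugate := by
              rw [this, one_mul]
          _ = ((Y z).adjugate)ᴴ * ((g z)ᴴ * g z) * (X z * (X z).adjugate) := by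
              rw [← e1]; simp only [mul_assoc]
          _ = _ := by rw [mul_adj (hXd z (hsub z hz)), mul_one]
      rw [e4, Matrix.conjTranspose_mul, ← e3, mul_assoc]) (by
      simp [hY1, sigma3_sq])
    intro z hz
    have h1 := hone z hz
    have h2 : sigma3 * X (-z) * sigma3 = X z := by
      calc sigma3 * X (-z) * sigma3
          = (X z * (X z).adjugate) * (sigma3 * X (-z) * sigma3) := by
            rw [mul_adj (hXd z hz), one_mul]
        _ = X z := by rw [mul_assoc, h1, mul_one]
    rw [← h2]
    simp only [mul_assoc, sigma3_mul_cancel, sigma3_sq, mul_one]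
  · have hZ : ∀ z : ℂ, ‖z‖ = 1 → Y z * X z = (g z * X z)ᴴ * (g z * X z) := by
      intro z hz
      have : Y z = ((g z)ᴴ * g z * X z)ᴴ := by rw [hE z hz, conjTranspose_conjTranspose]
      rw [this]
      simp only [Matrix.conjTranspose_mul, conjTranspose_conjTranspose, mul_assoc]
    intro z hz
    have hc := mhol_conj_const (hYh.mul hXh) (hYh.mul hXh) (by
      intro w hw
      rw [hZ w hw]
      simp only [Matrix.conjTranspose_mul, conjTranspose_conjTranspose, mul_assoc]) z (hsub z hz)
    rw [← hZ z hz, hc, hY1, one_mul]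

/-- A twisted matrix at the centre is diagonal. -/
lemma diag_of_twist {A : M2} (h : A = sigma3 * A * sigma3) : A 0 1 = 0 ∧ A 1 0 = 0 := by
  have h1 := congrFun (congrFun h 0) 1
  have h2 := congrFun (congrFun h 1) 0
  simp [sigma3, Matrix.mul_apply, Matrix.vecMul, dotProduct, Fin.sum_univ_two] at h1 h2
  constructor
  · linear_combination h1 / 2
  · linear_combination h2 / 2

lemma center_pos {A M : M2} (h : A = sigma3 * A * sigma3) (hd : A.det = 1) (hM : Mᴴ * M = A) :
    ∃ c : ℝ, 0 < c ∧ A = !![(c : ℂ), 0; 0, ((c⁻¹ : ℝ) : ℂ)] := by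
  obtain ⟨h1, h2⟩ := diag_of_twist h
  rw [Matrix.det_fin_two, h1, h2] at hd
  have h3 : A 0 0 = ((Complex.normSq (M 0 0) + Complex.normSq (M 1 0) : ℝ) : ℂ) := by
    rw [← hM, Matrix.mul_apply, Fin.sum_univ_two]
    simp [Matrix.conjTranspose_apply, Complex.normSq_eq_conj_mul_self]
  set c := Complex.normSq (M 0 0) + Complex.normSq (M 1 0) with hc
  have hc0 : 0 ≤ c := add_nonneg (Complex.normSq_nonneg _) (Complex.normSq_nonneg _)
  have hcne : c ≠ 0 := by
    intro h0
    rw [h3, h0] at hd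
    simp at hd
  refine ⟨c, lt_of_le_of_ne hc0 hcne.symm, ?_⟩
  have h4 : A 1 1 = ((c⁻¹ : ℝ) : ℂ) := by
    rw [Complex.ofReal_inv]
    refine eq_inv_of_mul_eq_one_right ?_
    rw [← h3]; linear_combination hd
  ext i j
  fin_cases i <;> fin_cases j
  · exact h3
  · exact h1
  · exact h2
  · exact h4

theorem iwasawa_unique {g F B F' B' : ℂ → M2} {ρ ρ' : ℝ} (h : IwasawaPair g F B ρ)
    (h' : IwasawaPair g F' B' ρ') :
    (∀ l : ℂ, ‖l‖ = 1 → F' l = F l) ∧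
        (∀ l ∈ Metric.closedBall (0:ℂ) 1, B' l = B l) := by
  obtain ⟨-, hF, hBc, hBd, -, hB, hρ, hB0, hg⟩ := h
  obtain ⟨-, hF', hBc', hBd', -, hB', hρ', hB0', hg'⟩ := h'
  have hBh := mhol_of hBc hBd
  have hBh' := mhol_of hBc' hBd'
  have hsub : ∀ z : ℂ, ‖z‖ = 1 → z ∈ Metric.closedBall (0 : ℂ) 1 := fun z hz => by simp [hz]
  have hK : ∀ z : ℂ, ‖z‖ = 1 → B' z * (B z).adjugate = (F' z)ᴴ * F z := by
    intro z hz
    calc B' z * (B z).adjugate = ((F' z)ᴴ * F' z) * B' z * (B z).adjugate := by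
          rw [(hF' z hz).1, one_mul]
      _ = (F' z)ᴴ * (F z * B z) * (B z).adjugate := by
          rw [← hg z hz, hg' z hz]; simp only [mul_assoc]
      _ = (F' z)ᴴ * F z * (B z * (B z).adjugate) := by simp only [mul_assoc]
      _ = _ := by rw [mul_adj (hB z (hsub z hz)).1, mul_one]
  have hK' : ∀ z : ℂ, ‖z‖ = 1 → B z * (B' z).adjugate = (F z)ᴴ * F' z := by
    intro z hz
    calc B z * (B' z).adjugate = ((F z)ᴴ * F z) * B z * (B' z).adjugate := by
          rw [(hF z hz).1, one_mul]
      _ = (F z)ᴴ * (F' z * B' z) * (B' z).adjugate := by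
          rw [← hg' z hz, hg z hz]; simp only [mul_assoc]
      _ = (F z)ᴴ * F' z * (B' z * (B' z).adjugate) := by simp only [mul_assoc]
      _ = _ := by rw [mul_adj (hB' z (hsub z hz)).1, mul_one]
  have hc := mhol_conj_const (hBh'.mul hBh.adj) (hBh.mul hBh'.adj) (by
    intro z hz
    rw [hK z hz, hK' z hz, Matrix.conjTranspose_mul, conjTranspose_conjTranspose])
  have hn : ((1 : ℂ)) ∈ Metric.closedBall (0 : ℂ) 1 := by simp
  have hu : (B' 0 * (B 0).adjugate)ᴴ * (B' 0 * (B 0).adjugate) = 1 := by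
    rw [← hc 1 hn, hK 1 (by simp), Matrix.conjTranspose_mul, conjTranspose_conjTranspose]
    have : F' 1 * (F' 1)ᴴ = 1 := mul_eq_one_comm.1 (hF' 1 (by simp)).1
    calc (F 1)ᴴ * F' 1 * ((F' 1)ᴴ * F 1) = (F 1)ᴴ * (F' 1 * (F' 1)ᴴ) * F 1 := by
          simp only [mul_assoc]
      _ = 1 := by rw [this, mul_one, (hF 1 (by simp)).1]
  have hρe : ρ' = ρ := by
    have h00 := congrFun (congrFun hu 0) 0
    rw [hB0, hB0'] at h00
    simp [Matrix.adjugate_fin_two, Matrix.mul_apply, Fin.sum_univ_two] at h00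
    have h01 : ρ' * ρ⁻¹ * (ρ' * ρ⁻¹) = 1 := by exact_mod_cast h00
    have h02 : ρ' * ρ⁻¹ = 1 := by
      have : 0 < ρ' * ρ⁻¹ := by positivity
      nlinarith
    field_simp at h02
    exact h02
  have h0 : B' 0 * (B 0).adjugate = 1 := by
    have : B' 0 = B 0 := by rw [hB0, hB0', hρe]
    rw [this, mul_adj (hB 0 (by simp)).1]
  have hBB : ∀ l ∈ Metric.closedBall (0:ℂ) 1, B' l = B l := by
    intro l hl
    have h1 := hc l hl
    rw [h0] at h1
    calc B' l = B' l * ((B l).adjugate * B l) := by rw [adj_mul (hB l hl).1, mul_one]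
      _ = B l := by rw [← mul_assoc, h1, one_mul]
  refine ⟨fun l hl => ?_, hBB⟩
  have h1 := hg' l hl
  rw [hg l hl, hBB l (hsub l hl)] at h1
  calc F' l = F' l * (B l * (B l).adjugate) := by rw [mul_adj (hB l (hsub l hl)).1, mul_one]
    _ = F l * (B l * (B l).adjugate) := by rw [← mul_assoc, ← h1, mul_assoc]
    _ = F l := by rw [mul_adj (hB l (hsub l hl)).1, mul_one]

theorem iwasawa_exists (g : ℂ → M2)
    (hgsm : ContDiff ℝ (⊤ : ℕ∞) (fun t : ℝ => g (Complex.exp (Complex.I * t))))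
    (hgdet : ∀ l : ℂ, ‖l‖ = 1 → (g l).det = 1)
    (hgtw : ∀ l : ℂ, ‖l‖ = 1 → g (-l) = sigma3 * g l * sigma3) :
    ∃ F B : ℂ → M2, ∃ ρ : ℝ, IwasawaPair g F B ρ := by
  obtain ⟨X, hXh, hXs, hXd, hXt, hXg⟩ := birkhoff_matrix g hgsm hgdet hgtw
  have hsub : ∀ z : ℂ, ‖z‖ = 1 → z ∈ Metric.closedBall (0 : ℂ) 1 := fun z hz => by simp [hz]
  have h0 : (0 : ℂ) ∈ Metric.closedBall (0 : ℂ) 1 := by simp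
  obtain ⟨c, hc, hX0⟩ := center_pos (A := X 0) (by simpa using hXt 0 h0) (hXd 0 h0)
    (hXg 1 (by simp))
  obtain ⟨ρ, hρ, hρc⟩ : ∃ ρ : ℝ, 0 < ρ ∧ ρ * ρ * c = 1 := by
    refine ⟨(Real.sqrt c)⁻¹, by positivity, ?_⟩
    have := Real.mul_self_sqrt hc.le
    have hs : 0 < Real.sqrt c := Real.sqrt_pos.2 hc
    field_simp
    rw [pow_two, this]
  have hcρ : c = ρ⁻¹ * ρ⁻¹ := by field_simp; linarith
  have hρne : (ρ : ℂ) ≠ 0 := by exact_mod_cast hρ.ne'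
  set D : M2 := !![(ρ : ℂ), 0; 0, ((ρ⁻¹ : ℝ) : ℂ)] with hD
  have hDd : D.det = 1 := by simp [hD, Matrix.det_fin_two, hρne]
  have hDt : sigma3 * D.adjugate * sigma3 = D.adjugate := by
    ext i j
    fin_cases i <;> fin_cases j <;>
      simp [hD, sigma3, Matrix.adjugate_fin_two]
  have hDs : Dᴴ = D := by
    ext i j
    fin_cases i <;> fin_cases j <;> simp [hD]
  have hDX : D * X 0 * D = 1 := by
    rw [hX0, hcρ]
    ext i j
    fin_cases i <;> fin_cases j <;> simp [hD, hρne]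
  have hBdet : ∀ z ∈ Metric.closedBall (0 : ℂ) 1, (D.adjugate * (X z).adjugate).det = 1 := by
    intro z hz
    rw [Matrix.det_mul, det_adj hDd, det_adj (hXd z hz), one_mul]
  have hBtw : ∀ z ∈ Metric.closedBall (0 : ℂ) 1, D.adjugate * (X (-z)).adjugate =
      sigma3 * (D.adjugate * (X z).adjugate) * sigma3 := by
    intro z hz
    rw [hXt z hz, adj_sigma]
    nth_rewrite 1 [← hDt]
    simp only [mul_assoc, sigma3_mul_cancel]
  refine ⟨fun z => g z * (X z * D), fun z => D.adjugate * (X z).adjugate, ρ,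
    contDiff_mmul hgsm (contDiff_mmul hXs contDiff_const), ?_,
    ((MHol.const D.adjugate).mul hXh.adj).continuousOn,
    ((MHol.const D.adjugate).mul hXh.adj).differentiableOn,
    contDiff_mmul contDiff_const (contDiff_adj hXs), fun l hl => ⟨hBdet l hl, hBtw l hl⟩, hρ, ?_, ?_⟩
  · intro l hl
    refine ⟨?_, ?_, ?_⟩
    · have := hXg l hl
      calc (g l * (X l * D))ᴴ * (g l * (X l * D)) = D * ((g l * X l)ᴴ * (g l * X l)) * D := by
            simp only [Matrix.conjTranspose_mul, hDs, mul_assoc]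
        _ = 1 := by rw [this, hDX]
    · rw [Matrix.det_mul, Matrix.det_mul, hgdet l hl, hXd l (hsub l hl), hDd]; simp
    · have hDt' : sigma3 * D * sigma3 = D := by
        ext i j
        fin_cases i <;> fin_cases j <;> simp [hD, sigma3]
      simp only
      rw [hgtw l hl, hXt l (hsub l hl)]
      nth_rewrite 1 [← hDt']
      simp only [mul_assoc, sigma3_mul_cancel]
  · simp only
    rw [hX0, hcρ]
    ext i j
    fin_cases i <;> fin_cases j <;> simp [hD, Matrix.adjugate_fin_two, hρne]
  · intro l hl
    have h1 : D * D.adjugate = 1 := mul_adj hDd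
    have h2 := mul_adj (hXd l (hsub l hl))
    calc g l = g l * (X l * (D * D.adjugate) * (X l).adjugate) := by rw [h1, mul_one, h2, mul_one]
      _ = _ := by simp only [mul_assoc]


/-- Iwasawa decomposition of the twisted loop group of `SL(2,ℂ)` for
smooth loops: existence and uniqueness of the factorization `g = F B`. -/
theorem iwasawa_decomposition
    (g : ℂ → M2)
    (hgsm : ContDiff ℝ (⊤ : ℕ∞) (fun t : ℝ => g (Complex.exp (Complex.I * t))))
    (hgdet : ∀ l : ℂ, ‖l‖ = 1 → (g l).det = 1)
    (hgtw : ∀ l : ℂ, ‖l‖ = 1 → g (-l) = sigma3 * g l * sigma3) :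
    ∃ F B : ℂ → M2, ∃ ρ : ℝ, IwasawaPair g F B ρ ∧
      ∀ F' B' : ℂ → M2, ∀ ρ' : ℝ, IwasawaPair g F' B' ρ' →
        (∀ l : ℂ, ‖l‖ = 1 → F' l = F l) ∧
        (∀ l ∈ Metric.closedBall (0:ℂ) 1, B' l = B l) := by
  obtain ⟨F, B, ρ, h⟩ := iwasawa_exists g hgsm hgdet hgtw
  exact ⟨F, B, ρ, h, fun F' B' ρ' h' => iwasawa_unique h h'⟩
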